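/- arXiv:1804.02194 — 4 statements merged into one kernel-verified Lean document; each statement's English description precedes it below -/
import Mathlib

section
/- Let X be a Banach sequence space over a countably infinite index set I in which the canonical unit vectors (e_i)_{i∈I} form an OP-basis, let φ : I → I be an injective map, and for each 1 ≤ l ≤ N (N ≥ 2) let T_l = T_{b^{(l)},φ} : X → X be a weighted pseudo-shift generated by φ with weight sequence b^{(l)} = (b_i^{(l)})_{i∈I} of nonzero scalars. Then for any integers 1 ≤ r₁ < r₂ < ⋯ < r_N the following are equivalent: (1) T₁^{r₁}, T₂^{r₂}, …, T_N^{r_N} have a dense set of d-supercyclic vectors; (2) (α) the mapping φ has no periodic points, and (β) there exists a strictly increasing sequence (n_k)_{k≥1} of positive integers such that: (H1) for all i, j ∈ I and all 1 ≤ l, s ≤ N, ‖(∏_{v=0}^{r_l n_k−1} b^{(l)}_{φ^v(i)})^{−1} e_{φ^{r_l n_k}(i)}‖ · ‖(∏_{v=1}^{r_s n_k} b^{(s)}_{ψ^v(j)}) e_{ψ^{r_s n_k}(j)}‖ → 0 as k → ∞; and (H2) for every i ∈ I and all 1 ≤ s < l ≤ N, ‖(∏_{v=0}^{r_s n_k−1}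 b^{(s)}_{φ^v(i)})^{−1} (∏_{v=1}^{r_l n_k} b^{(l)}_{ψ^v(φ^{r_s n_k}(i))}) e_{ψ^{(r_l−r_s) n_k}(i)}‖ → 0 and ‖(∏_{v=0}^{r_l n_k−1} b^{(l)}_{φ^v(i)})^{−1} (∏_{v=1}^{r_s n_k} b^{(s)}_{ψ^v(φ^{r_l n_k}(i))}) e_{φ^{(r_l−r_s) n_k}(i)}‖ → 0 as k → ∞. -/
open Filter Topology
open scoped Classical

/-- The vector `(∏_{v=1}^{n} b_{ψ^v(i)}) • e_{ψ^n(i)}`, where `ψ` is the partial inverse of the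
injective map `φ`, with the convention that the whole term is `0` when `ψ^n(i)` is undefined
(i.e. when `i ∉ φ^n(I)`). -/
noncomputable def backVec {I X : Type*} [AddCommGroup X] [Module ℂ X]
    (φ : I → I) (b : I → ℂ) (e : I → X) (n : ℕ) (i : I) : X :=
  if h : ∃ j, φ^[n] j = i then
    (∏ v ∈ Finset.range n, b (φ^[v] (Classical.choose h))) • e (Classical.choose h)
  else 0

section helpers

variable {X : Type*} [NormedAddCommGroup X] [NormedSpace ℂ X] {I : Type*}

theorem backVec_iter {φ : I → I} (hφ : Function.Injective φ) (b : I → ℂ) (e : I → X) (n : ℕ)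
    (i : I) : backVec φ b e n (φ^[n] i) = (∏ v ∈ Finset.range n, b (φ^[v] i)) • e i := by
  have h : ∃ j, φ^[n] j = φ^[n] i := ⟨i, rfl⟩
  have hc : Classical.choose h = i := (hφ.iterate n) (Classical.choose_spec h)
  unfold backVec
  rw [dif_pos h, hc]

theorem backVec_none {φ : I → I} (b : I → ℂ) (e : I → X) (n : ℕ)
    (i : I) (h : ¬ ∃ j, φ^[n] j = i) : backVec φ b e n i = 0 := by
  unfold backVec
  rw [dif_neg h]

theorem pow_coord (J : X →L[ℂ] (I → ℂ)) (φ : I → I) (b : I → ℂ) (T : X →L[ℂ] X)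
    (hT : ∀ (x : X) (i : I), J (T x) i = b i * J x (φ i)) (n : ℕ) :
    ∀ (x : X) (i : I), J ((T ^ n) x) i = (∏ v ∈ Finset.range n, b (φ^[v] i)) * J x (φ^[n] i) := by
  induction n with
  | zero => intro x i; simp
  | succ n ih =>
    intro x i
    rw [pow_succ, mul_apply_eq_comp, ih, hT, Finset.prod_range_succ,
      Function.iterate_succ_apply']
    ring

theorem pow_e (J : X →L[ℂ] (I → ℂ)) (hJ : Function.Injective J)
    (e : I → X) (he : ∀ i j : I, J (e i) j = if j = i then 1 else 0)
    (φ : I → I) (hφ : Function.Injective φ) (b : I → ℂ) (T : X →L[ℂ] X)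
    (hT : ∀ (x : X) (i : I), J (T x) i = b i * J x (φ i)) (n : ℕ) (j : I) :
    (T ^ n) (e j) = backVec φ b e n j := by
  apply hJ
  funext i
  rw [pow_coord J φ b T hT, he]
  by_cases h : ∃ k, φ^[n] k = j
  · obtain ⟨k, rfl⟩ := h
    rw [backVec_iter hφ, map_smul, Pi.smul_apply, he]
    by_cases hik : i = k
    · subst hik; simp
    · have : φ^[n] i ≠ φ^[n] k := fun h => hik (hφ.iterate n h)
      simp [hik, this]
  · rw [backVec_none _ _ _ _ h]
    have : φ^[n] i ≠ j := fun h' => h ⟨i, h'⟩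
    simp [this]

theorem no_return {φ : I → I} (hp : ∀ i : I, ∀ M : ℕ, 1 ≤ M → φ^[M] i ≠ i) (F : Finset I) :
    ∃ m₀ : ℕ, ∀ m, m₀ ≤ m → ∀ i ∈ F, ∀ j ∈ F, φ^[m] i ≠ j := by
  have h1 : ∀ i j : I, {m : ℕ | φ^[m] i = j}.Subsingleton := by
    intro i j
    have key : ∀ m m', φ^[m] i = j → φ^[m'] i = j → m < m' → False := by
      intro m m' h h' hlt
      apply hp j (m' - m) (by omega)
      rw [← h]
      conv_lhs => rw [← Function.iterate_add_apply]
      rw [show m' - m + m = m' by omega, h, h']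
    intro m hm m' hm'
    rcases lt_trichotomy m m' with h | h | h
    · exact (key m m' hm hm' h).elim
    · exact h
    · exact (key m' m hm' hm h).elim
  have h2 : (⋃ i ∈ F, ⋃ j ∈ F, {m : ℕ | φ^[m] i = j}).Finite := by
    refine Set.Finite.biUnion F.finite_toSet fun i _ => ?_
    exact Set.Finite.biUnion F.finite_toSet fun j _ => (h1 i j).finite
  obtain ⟨B, hB⟩ := h2.bddAbove
  refine ⟨B + 1, fun m hm i hi j hj h => ?_⟩
  have : m ≤ B := hB (by
    simp only [Set.mem_iUnion]
    exact ⟨i, hi, j, hj, h⟩)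
  omega

theorem coord_bound (J : X →L[ℂ] (I → ℂ)) (e : I → X) (f : I → X →L[ℂ] ℂ)
    (hf : ∀ (i : I) (x : X), f i x = J x i) (C : ℝ) (hC : ∀ i : I, ‖e i‖ * ‖f i‖ ≤ C)
    (x : X) (i : I) : ‖J x i‖ * ‖e i‖ ≤ C * ‖x‖ := by
  rw [← hf]
  calc ‖f i x‖ * ‖e i‖ ≤ (‖f i‖ * ‖x‖) * ‖e i‖ := by gcongr; exact (f i).le_opNorm x
    _ = (‖e i‖ * ‖f i‖) * ‖x‖ := by ring
    _ ≤ C * ‖x‖ := by gcongr; exact hC i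

theorem e_pos (J : X →L[ℂ] (I → ℂ)) (e : I → X)
    (he : ∀ i j : I, J (e i) j = if j = i then 1 else 0) (i : I) : 0 < ‖e i‖ := by
  rw [norm_pos_iff]
  intro h
  have := he i i
  rw [h] at this
  simp at this

theorem J_sum (J : X →L[ℂ] (I → ℂ)) (e : I → X)
    (he : ∀ i j : I, J (e i) j = if j = i then 1 else 0) (F : Finset I) (i : I) :
    J (∑ j ∈ F, e j) i = if i ∈ F then 1 else 0 := by
  rw [map_sum, Finset.sum_apply]
  simp [he]

theorem near_sum (J : X →L[ℂ] (I → ℂ)) (e : I → X)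
    (he : ∀ i j : I, J (e i) j = if j = i then 1 else 0) (f : I → X →L[ℂ] ℂ)
    (hf : ∀ (i : I) (x : X), f i x = J x i) (C : ℝ) (hC0 : 0 < C)
    (hC : ∀ i : I, ‖e i‖ * ‖f i‖ ≤ C) (F : Finset I) (η : ℝ) (hη : ∀ i ∈ F, η ≤ ‖e i‖ / 2)
    (z : X) (hz : ‖z - ∑ j ∈ F, e j‖ ≤ η / C) :
    (∀ i ∈ F, 1 / 2 ≤ ‖J z i‖) ∧ ∀ i, i ∉ F → ‖J z i‖ * ‖e i‖ ≤ η := by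
  have hb : ∀ i, ‖J z i - (if i ∈ F then 1 else 0)‖ * ‖e i‖ ≤ η := by
    intro i
    have h1 := coord_bound J e f hf C hC (z - ∑ j ∈ F, e j) i
    rw [map_sub, Pi.sub_apply, J_sum J e he] at h1
    calc _ ≤ _ := h1
      _ ≤ C * (η / C) := by gcongr
      _ = η := by field_simp
  constructor
  · intro i hi
    have h1 := hb i
    rw [if_pos hi] at h1
    have h2 := hη i hi
    have h3 := e_pos J e he i
    have h4 : ‖J z i - 1‖ ≤ 1 / 2 := by
      by_contra hcon
      push Not at hcon
      nlinarith
    have h5 : ‖(1 : ℂ)‖ ≤ ‖J z i‖ + ‖J z i - 1‖ := by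
      have := norm_sub_le (J z i) (J z i - 1)
      simpa using this
    rw [norm_one] at h5
    linarith
  · intro i hi
    have h1 := hb i
    rw [if_neg hi] at h1
    simpa using h1

/-- removing finitely many times from a dense projective orbit -/
theorem dense_tail {Y : Type*} [NormedAddCommGroup Y] [NormedSpace ℂ Y]
    (hinf : ¬ FiniteDimensional ℂ Y) (u : ℕ → Y)
    (hd : Dense (Set.range fun p : ℂ × ℕ => p.1 • u p.2)) (m : ℕ) :
    ∀ V : Set Y, IsOpen V → V.Nonempty → ∃ (c : ℂ) (n : ℕ), m ≤ n ∧ c • u n ∈ V := by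
  have hO : ∀ m : ℕ, ∀ V : Set Y, IsOpen V → V.Nonempty →
      ∃ W : Set Y, W ⊆ V ∧ IsOpen W ∧ W.Nonempty ∧ ∀ n < m, ∀ c : ℂ, c • u n ∉ W := by
    intro m
    induction m with
    | zero => intro V hV hne; exact ⟨V, subset_rfl, hV, hne, by simp⟩
    | succ m ih =>
      intro V hV hne
      obtain ⟨W, hWV, hW, hWne, hWn⟩ := ih V hV hne
      let L : Submodule ℂ Y := ℂ ∙ (u m)
      have hLc : IsClosed (L : Set Y) := L.closed_of_finiteDimensional
      refine ⟨W \ L, Set.sdiff_subset.trans hWV, hW.sdiff hLc, ?_, ?_⟩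
      · rw [Set.nonempty_iff_ne_empty]
        intro hemp
        have hsub : W ⊆ L := Set.sdiff_eq_empty.mp hemp
        have htop : L = ⊤ := by
          apply Submodule.eq_top_of_nonempty_interior'
          exact hWne.mono (interior_maximal hsub hW)
        apply hinf
        have hfd : FiniteDimensional ℂ L := inferInstance
        rw [htop] at hfd
        exact Module.Finite.equiv (Submodule.topEquiv : (⊤ : Submodule ℂ Y) ≃ₗ[ℂ] Y)
      · intro n hn c hc
        rcases Nat.lt_succ_iff_lt_or_eq.mp hn with h | h
        · exact hWn n h c hc.1
        · subst h
          exact hc.2 (Submodule.smul_mem _ c (Submodule.mem_span_singleton_self _))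
  intro V hV hne
  obtain ⟨W, hWV, hW, hWne, hWn⟩ := hO m V hV hne
  obtain ⟨y, hyW, ⟨⟨c, n⟩, rfl⟩⟩ := hd.inter_open_nonempty W hW hWne
  refine ⟨c, n, ?_, hWV hyW⟩
  by_contra h
  exact hWn n (not_le.mp h) c hyW

end helpers

section helpers2

theorem ratio_bound (u v : ℕ → ℂ) (c d : ℂ) (M : ℕ) (hM : 1 ≤ M)
    (hu : ∀ n, u (n + M) = c * u n) (hv : ∀ n, v (n + M) = d * v n) (hcd : ‖c‖ ≤ ‖d‖)
    (hd : d ≠ 0) : ∃ K : ℝ, 0 ≤ K ∧ ∀ n, v n ≠ 0 → ‖u n‖ ≤ K * ‖v n‖ := by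
  refine ⟨∑ t ∈ Finset.range M, ‖u t‖ / ‖v t‖, by positivity, ?_⟩
  intro n
  induction n using Nat.strong_induction_on with
  | _ n ih =>
    intro hn
    by_cases h : n < M
    · have h1 : ‖u n‖ / ‖v n‖ ≤ ∑ t ∈ Finset.range M, ‖u t‖ / ‖v t‖ :=
        Finset.single_le_sum (f := fun t => ‖u t‖ / ‖v t‖) (fun t _ => by positivity)
          (Finset.mem_range.mpr h)
      exact (div_le_iff₀ (norm_pos_iff.mpr hn)).mp h1
    · obtain ⟨m, rfl⟩ : ∃ m, n = m + M := ⟨n - M, by omega⟩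
      rw [hv] at hn
      have hm := ih m (by omega) (right_ne_zero_of_mul hn)
      rw [hu, hv, norm_mul, norm_mul]
      calc ‖c‖ * ‖u m‖ ≤ ‖d‖ * ((∑ t ∈ Finset.range M, ‖u t‖ / ‖v t‖) * ‖v m‖) := by gcongr
        _ = _ := by ring

variable {X : Type*} [NormedAddCommGroup X] [NormedSpace ℂ X] {I : Type*}

theorem coord_periodic (J : X →L[ℂ] (I → ℂ)) (φ : I → I) (b : I → ℂ) (hb : ∀ i, b i ≠ 0)
    (T : X →L[ℂ] X)
    (hT : ∀ (x : X) (i : I), J (T x) i = b i * J x (φ i)) (r M : ℕ) (i : I) (hi : φ^[M] i = i)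
    (x : X) : ∃ c : ℂ, c ≠ 0 ∧ ∀ n, J ((T ^ (r * (n + M))) x) i = c * J ((T ^ (r * n)) x) i := by
  have h1 : ∀ m y, J ((T ^ (M * m)) y) i = (∏ v ∈ Finset.range M, b (φ^[v] i)) ^ m * J y i := by
    intro m
    induction m with
    | zero => intro y; simp
    | succ m ih =>
      intro y
      rw [Nat.mul_succ, pow_add, mul_apply_eq_comp, ih, pow_coord J φ b T hT, hi]
      ring
  refine ⟨(∏ v ∈ Finset.range M, b (φ^[v] i)) ^ r, ?_, fun n => ?_⟩
  · exact pow_ne_zero _ (Finset.prod_ne_zero_iff.mpr fun v _ => hb _)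
  · rw [show r * (n + M) = M * r + r * n by ring, pow_add, mul_apply_eq_comp, h1]

theorem no_periodic_aux
    (J : X →L[ℂ] (I → ℂ)) (e : I → X) (he : ∀ i j : I, J (e i) j = if j = i then 1 else 0)
    {N : ℕ} (u : Fin N → ℕ → X)
    (hd : Dense (Set.range fun p : ℂ × ℕ => fun l : Fin N => p.1 • u l p.2))
    (i : I) (l₀ l₁ : Fin N) (hl : l₀ ≠ l₁) (K : ℝ) (hK0 : 0 ≤ K)
    (hK : ∀ n, J (u l₁ n) i ≠ 0 → ‖J (u l₀ n) i‖ ≤ K * ‖J (u l₁ n) i‖) : False := by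
  let V : Set (Fin N → X) := {y | ‖J (y l₀) i - ((2 * K + 3 : ℝ) : ℂ)‖ < 1 / 2 ∧
    ‖J (y l₁) i - 1‖ < 1 / 2}
  have hJc : ∀ l : Fin N, Continuous fun y : Fin N → X => J (y l) i := fun l =>
    (continuous_apply i).comp (J.continuous.comp (continuous_apply l))
  have hV : IsOpen V := by
    apply IsOpen.inter
    · exact isOpen_lt (((hJc l₀).sub continuous_const).norm) continuous_const
    · exact isOpen_lt (((hJc l₁).sub continuous_const).norm) continuous_const
  have hne : V.Nonempty := by
    refine ⟨fun l => (if l = l₀ then ((2 * K + 3 : ℝ) : ℂ) else 1) • e i, ?_, ?_⟩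
    · simp [he]
    · simp [he, hl.symm]
  obtain ⟨y, ⟨h1, h2⟩, ⟨⟨c, n⟩, rfl⟩⟩ := hd.inter_open_nonempty V hV hne
  simp only [map_smul, Pi.smul_apply, smul_eq_mul] at h1 h2
  have hv0 : J (u l₁ n) i ≠ 0 := by
    intro h
    rw [h] at h2
    norm_num at h2
  have h3 := hK n hv0
  have h4 : ‖((2 * K + 3 : ℝ) : ℂ)‖ ≤ ‖c * J (u l₀ n) i‖ + ‖c * J (u l₀ n) i - ((2 * K + 3 : ℝ) : ℂ)‖ := by
    have := norm_sub_le (c * J (u l₀ n) i) (c * J (u l₀ n) i - ((2 * K + 3 : ℝ) : ℂ))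
    rwa [sub_sub_cancel] at this
  have h5 : ‖c * J (u l₁ n) i‖ ≤ ‖c * J (u l₁ n) i - 1‖ + 1 := by
    have := norm_add_le (c * J (u l₁ n) i - 1) 1
    simpa using this
  rw [Complex.norm_real, Real.norm_of_nonneg (by linarith)] at h4
  have h6 : ‖c * J (u l₀ n) i‖ ≤ K * ‖c * J (u l₁ n) i‖ := by
    rw [norm_mul, norm_mul]
    nlinarith [norm_nonneg c, mul_le_mul_of_nonneg_left h3 (norm_nonneg c)]
  have h7 : K * ‖c * J (u l₁ n) i‖ ≤ K * (3 / 2) := by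
    gcongr
    linarith
  linarith

theorem key_forward
    (hinfdim : ¬ FiniteDimensional ℂ X)
    (J : X →L[ℂ] (I → ℂ))
    (e : I → X) (he : ∀ i j : I, J (e i) j = if j = i then 1 else 0)
    (f : I → X →L[ℂ] ℂ) (hf : ∀ (i : I) (x : X), f i x = J x i)
    (hOP : ∃ C : ℝ, ∀ i : I, ‖e i‖ * ‖f i‖ ≤ C)
    (φ : I → I) (hφ : Function.Injective φ)
    {N : ℕ} (hN : 2 ≤ N)
    (r : Fin N → ℕ) (hr1 : ∀ l, 1 ≤ r l) (hr : Function.Injective r)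
    (b : Fin N → I → ℂ) (hb : ∀ l i, b l i ≠ 0)
    (T : Fin N → X →L[ℂ] X)
    (hT : ∀ (l : Fin N) (x : X) (i : I), J (T l x) i = b l i * J x (φ i))
    (hD : Dense {x : X | Dense (Set.range fun p : ℂ × ℕ =>
        fun l : Fin N => p.1 • (((T l) ^ (r l * p.2)) x))})
    (hp : ∀ i : I, ∀ M : ℕ, 1 ≤ M → φ^[M] i ≠ i) (F : Finset I) (ε : ℝ) (hε : 0 < ε) (m : ℕ) :
    ∃ n, m ≤ n ∧ 
      (∀ i ∈ F, ∀ j ∈ F, ∀ l s : Fin N,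
          ‖(∏ v ∈ Finset.range (r l * n), b l (φ^[v] i))⁻¹ •
                e (φ^[r l * n] i)‖ * ‖backVec φ (b s) e (r s * n) j‖ ≤ ε) ∧
      (∀ i ∈ F, ∀ s l : Fin N, s ≠ l →
          ‖(∏ v ∈ Finset.range (r s * n), b s (φ^[v] i))⁻¹ •
              backVec φ (b l) e (r l * n) (φ^[r s * n] i)‖ ≤ ε) := by
  obtain ⟨C₀, hC₀⟩ := hOP
  obtain ⟨C, hC0, hC⟩ : ∃ C : ℝ, 0 < C ∧ ∀ i : I, ‖e i‖ * ‖f i‖ ≤ C :=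
    ⟨max C₀ 1, by positivity, fun i => (hC₀ i).trans (le_max_left _ _)⟩
  obtain ⟨m₀, hm₀⟩ := no_return hp F
  obtain ⟨η, hη0, hη1, hηε, hη⟩ : ∃ η : ℝ, 0 < η ∧ η ≤ 1 ∧ 4 * η ≤ ε ∧ ∀ i ∈ F, η ≤ ‖e i‖ / 2 := by
    have h1 : ∀ᶠ η : ℝ in 𝓝[>] 0, η ≤ 1 :=
      nhdsWithin_le_nhds (Iic_mem_nhds one_pos)
    have h2 : ∀ᶠ η : ℝ in 𝓝[>] 0, η ≤ ε / 4 :=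
      nhdsWithin_le_nhds (Iic_mem_nhds (by positivity))
    have h3 : ∀ᶠ η : ℝ in 𝓝[>] 0, ∀ i ∈ F, η ≤ ‖e i‖ / 2 := by
      rw [Filter.eventually_all_finset]
      intro i _
      exact nhdsWithin_le_nhds (Iic_mem_nhds (half_pos (e_pos J e he i)))
    obtain ⟨η, ⟨⟨h1, h2⟩, h3⟩, h4⟩ := (((h1.and h2).and h3).and self_mem_nhdsWithin).exists
    exact ⟨η, h4, h1, by linarith, h3⟩
  have hδ : 0 < η / C := by positivity
  obtain ⟨x, hxD, hx⟩ := hD.exists_dist_lt (∑ j ∈ F, e j) hδ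
  have hinfY : ¬ FiniteDimensional ℂ (Fin N → X) := by
    intro hY
    apply hinfdim
    exact Module.Finite.of_surjective (LinearMap.proj (R := ℂ) (φ := fun _ : Fin N => X) ⟨0, by omega⟩)
      (Function.surjective_eval _)
  obtain ⟨c, n, hn, hcn⟩ := dense_tail hinfY (fun n => fun l : Fin N => ((T l) ^ (r l * n)) x) hxD
    (max m (max m₀ 1)) (Metric.ball (fun _ => ∑ j ∈ F, e j) (η / C)) Metric.isOpen_ball
    ⟨_, Metric.mem_ball_self hδ⟩
  have hn1 : 1 ≤ n := by omega
  have hnm : m₀ ≤ n := by omega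
  have hx' := near_sum J e he f hf C hC0 hC F η hη x (by
    rw [← dist_eq_norm, dist_comm]; exact hx.le)
  have hy' : ∀ l, (∀ i ∈ F, 1 / 2 ≤ ‖c * ((∏ v ∈ Finset.range (r l * n), b l (φ^[v] i)) * J x (φ^[r l * n] i))‖) ∧
      ∀ i, i ∉ F → ‖c * ((∏ v ∈ Finset.range (r l * n), b l (φ^[v] i)) * J x (φ^[r l * n] i))‖ * ‖e i‖ ≤ η := by
    intro l
    have h1 := near_sum J e he f hf C hC0 hC F η hη (c • ((T l) ^ (r l * n)) x) (by
      rw [← dist_eq_norm]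
      exact (dist_le_pi_dist _ _ l).trans (Metric.mem_ball.mp hcn).le)
    simpa only [map_smul, Pi.smul_apply, smul_eq_mul, pow_coord J φ (b l) (T l) (hT l)] using h1
  have hW : ∀ l i, (∏ v ∈ Finset.range (r l * n), b l (φ^[v] i)) ≠ 0 := fun l i =>
    Finset.prod_ne_zero_iff.mpr fun v _ => hb _ _
  have hrn : ∀ l, m₀ ≤ r l * n := fun l => hnm.trans (Nat.le_mul_of_pos_left n (hr1 l))
  refine ⟨n, by omega, ?_, ?_⟩
  · intro i hi j hj l s
    by_cases h : ∃ k, φ^[r s * n] k = j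
    swap
    · rw [backVec_none _ _ _ _ h, norm_zero, mul_zero]; exact hε.le
    obtain ⟨k, rfl⟩ := h
    have hk : k ∉ F := fun hk => hm₀ _ (hrn s) k hk _ hj rfl
    have hi' : φ^[r l * n] i ∉ F := fun h => hm₀ _ (hrn l) i hi _ h rfl
    rw [backVec_iter hφ, norm_smul, norm_smul, norm_inv]
    have a1 := (hy' l).1 i hi
    have a2 := (hy' s).2 k hk
    have a3 := hx'.1 _ hj
    have a4 := hx'.2 _ hi'
    have w1 := norm_pos_iff.mpr (hW l i)
    rw [norm_mul, norm_mul] at a1 a2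
    generalize ‖∏ v ∈ Finset.range (r l * n), b l (φ^[v] i)‖ = p at *
    generalize ‖∏ v ∈ Finset.range (r s * n), b s (φ^[v] k)‖ = q at *
    have ek := norm_nonneg (e k)
    have ei := norm_nonneg (e (φ^[r l * n] i))
    have xi := norm_nonneg (J x (φ^[r l * n] i))
    have xk := norm_nonneg (J x (φ^[r s * n] k))
    have c0 := norm_nonneg c
    generalize ‖J x (φ^[r l * n] i)‖ = A at *
    generalize ‖J x (φ^[r s * n] k)‖ = B at *
    generalize ‖e k‖ = E at *
    generalize ‖e (φ^[r l * n] i)‖ = G at *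
    generalize hc : ‖c‖ = c' at *
    have q0 : 0 ≤ q ∨ True := Or.inr trivial
    have hcpos : 0 < c' := by
      rcases c0.lt_or_eq with h | h
      · exact h
      · rw [← h] at a1; norm_num at a1
    have b1 : p⁻¹ ≤ 2 * c' * A := by
      rw [inv_le_iff_one_le_mul₀ w1]
      nlinarith
    have b2 : p⁻¹ * G ≤ 2 * c' * η := by
      calc p⁻¹ * G ≤ (2 * c' * A) * G := by gcongr
        _ = 2 * c' * (A * G) := by ring
        _ ≤ _ := by gcongr
    have b3 : q * E ≤ 2 * η / c' := by
      rw [le_div_iff₀ hcpos]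
      by_cases hqE : q * E * c' ≤ 0
      · linarith
      · push Not at hqE
        nlinarith
    have b0 : 0 ≤ p⁻¹ * G := by positivity
    calc p⁻¹ * G * (q * E) ≤ p⁻¹ * G * (2 * η / c') := by gcongr
      _ ≤ 2 * c' * η * (2 * η / c') := by gcongr
      _ = 4 * η * η := by field_simp; ring
      _ ≤ 4 * η * 1 := by gcongr
      _ ≤ ε := by linarith
  · intro i hi s l hsl
    by_cases h : ∃ k, φ^[r l * n] k = φ^[r s * n] i
    swap
    · rw [backVec_none _ _ _ _ h, smul_zero, norm_zero]; exact hε.le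
    obtain ⟨k, hk⟩ := h
    have hkF : k ∉ F := by
      intro hkF
      have hrne : r s ≠ r l := fun h => hsl (hr h)
      rcases lt_or_gt_of_ne hrne with h | h
      · have h1 : r l * n = r s * n + (r l - r s) * n := by
          rw [← add_mul]; congr 1; omega
        rw [h1, Function.iterate_add_apply] at hk
        have h2 := (hφ.iterate _) hk
        exact hm₀ _ (hnm.trans (Nat.le_mul_of_pos_left n (by omega))) k hkF i hi h2
      · have h1 : r s * n = r l * n + (r s - r l) * n := by
          rw [← add_mul]; congr 1; omega
        rw [h1, Function.iterate_add_apply] at hk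
        have h2 := (hφ.iterate _) hk
        exact hm₀ _ (hnm.trans (Nat.le_mul_of_pos_left n (by omega))) i hi k hkF h2.symm
    have a2 := (hy' l).2 k hkF
    have a1 := (hy' s).1 i hi
    rw [← hk, backVec_iter hφ, norm_smul, norm_smul, norm_inv]
    rw [← hk] at a1
    have w1 := norm_pos_iff.mpr (hW s i)
    rw [norm_mul, norm_mul] at a1 a2
    rw [inv_mul_le_iff₀ w1]
    have w2 := norm_nonneg (∏ v ∈ Finset.range (r l * n), b l (φ^[v] k))
    have ek := norm_nonneg (e k)
    have c0 := norm_nonneg c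
    have xk := norm_nonneg (J x (φ^[r l * n] k))
    generalize ‖∏ v ∈ Finset.range (r s * n), b s (φ^[v] i)‖ = p at *
    generalize ‖∏ v ∈ Finset.range (r l * n), b l (φ^[v] k)‖ = q at *
    generalize ‖J x (φ^[r l * n] k)‖ = A at *
    generalize ‖e k‖ = E at *
    generalize ‖c‖ = c' at *
    have hcA : 0 < c' * A := by
      rcases (mul_nonneg c0 xk).lt_or_eq with h | h
      · exact h
      · have : c' * (p * A) = p * (c' * A) := by ring
        rw [this, ← h] at a1; norm_num at a1
    have h1 : (c' * A) * (q * E) ≤ (c' * A) * (p * ε) := by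
      calc (c' * A) * (q * E) = c' * (q * A) * E := by ring
        _ ≤ η := a2
        _ ≤ (1 / 2) * ε := by linarith
        _ ≤ (c' * (p * A)) * ε := by gcongr
        _ = _ := by ring
    exact le_of_mul_le_mul_left h1 hcA

end helpers2

section helpers3

variable {X : Type*} [NormedAddCommGroup X] [NormedSpace ℂ X] {I : Type*}

theorem choose_scale (A B ε : ℝ) (hA : 0 ≤ A) (hB : 0 ≤ B) (hε : 0 < ε) (h : A * B < ε ^ 2) :
    ∃ t : ℝ, 0 < t ∧ t * A < ε ∧ t⁻¹ * B < ε := by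
  obtain ⟨d, hd, hd1⟩ : ∃ d : ℝ, 0 < d ∧ A * (B + d) < ε ^ 2 := by
    refine ⟨(ε ^ 2 - A * B) / (2 * (A + 1)), div_pos (by linarith) (by positivity), ?_⟩
    have h1 : A * ((ε ^ 2 - A * B) / (2 * (A + 1))) < ε ^ 2 - A * B := by
      rw [mul_div_assoc', div_lt_iff₀ (by positivity)]
      nlinarith
    rw [mul_add]; linarith
  refine ⟨(B + d) / ε, by positivity, ?_, ?_⟩
  · rw [div_mul_eq_mul_div, div_lt_iff₀ hε]
    nlinarith
  · rw [inv_div, div_mul_eq_mul_div, div_lt_iff₀ (by positivity)]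
    nlinarith

theorem right_inverse_seq (e : I → X) {N : ℕ} (R : Fin N → ℕ → X →L[ℂ] X) (l : Fin N)
    (S : I → ℕ → X) (hS : ∀ i k, R l k (S i k) = e i)
    (hS0 : ∀ i, ∀ s, s ≠ l → Tendsto (fun k => R s k (S i k)) atTop (𝓝 0))
    (hS1 : ∀ i j s, Tendsto (fun k => ‖S i k‖ * ‖R s k (e j)‖) atTop (𝓝 0))
    (y : X) (hy : y ∈ Submodule.span ℂ (Set.range e)) :
    ∃ Z : ℕ → X, (∀ k, R l k (Z k) = y) ∧
      (∀ s, s ≠ l → Tendsto (fun k => R s k (Z k)) atTop (𝓝 0)) ∧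
      (∀ j s, Tendsto (fun k => ‖Z k‖ * ‖R s k (e j)‖) atTop (𝓝 0)) := by
  induction hy using Submodule.span_induction with
  | mem x hx =>
    obtain ⟨i, rfl⟩ := hx
    exact ⟨S i, hS i, hS0 i, hS1 i⟩
  | zero => exact ⟨fun _ => 0, by simp, by simp, by simp⟩
  | add x y _ _ ihx ihy =>
    obtain ⟨Z, h1, h2, h3⟩ := ihx
    obtain ⟨Z', h1', h2', h3'⟩ := ihy
    refine ⟨fun k => Z k + Z' k, fun k => by rw [map_add, h1, h1'], fun s hs => ?_, fun j s => ?_⟩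
    · simpa using (h2 s hs).add (h2' s hs)
    · refine squeeze_zero (fun k => by positivity) (fun k => ?_)
        (by simpa using (h3 j s).add (h3' j s))
      rw [← add_mul]
      gcongr
      exact norm_add_le _ _
  | smul a x _ ih =>
    obtain ⟨Z, h1, h2, h3⟩ := ih
    refine ⟨fun k => a • Z k, fun k => by rw [map_smul, h1], fun s hs => ?_, fun j s => ?_⟩
    · simpa using (h2 s hs).const_smul a
    · simpa [norm_smul, mul_assoc] using (h3 j s).const_mul ‖a‖

theorem span_right (e : I → X) {N : ℕ} (R : Fin N → ℕ → X →L[ℂ] X) (Z : ℕ → X) (s : Fin N)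
    (h : ∀ j, Tendsto (fun k => ‖Z k‖ * ‖R s k (e j)‖) atTop (𝓝 0))
    (x : X) (hx : x ∈ Submodule.span ℂ (Set.range e)) :
    Tendsto (fun k => ‖Z k‖ * ‖R s k x‖) atTop (𝓝 0) := by
  induction hx using Submodule.span_induction with
  | mem x hx => obtain ⟨i, rfl⟩ := hx; exact h i
  | zero => simp
  | add x y _ _ ihx ihy =>
    refine squeeze_zero (fun k => by positivity) (fun k => ?_) (by simpa using ihx.add ihy)
    rw [← mul_add, map_add]
    gcongr
    exact norm_add_le _ _
  | smul a x _ ih =>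
    simpa [norm_smul, mul_left_comm] using ih.const_mul ‖a‖

theorem transit (e : I → X) {N : ℕ} (R : Fin N → ℕ → X →L[ℂ] X)
    (S : Fin N → I → ℕ → X) (hS : ∀ l i k, R l k (S l i k) = e i)
    (hS0 : ∀ l i, ∀ s, s ≠ l → Tendsto (fun k => R s k (S l i k)) atTop (𝓝 0))
    (hS1 : ∀ l i j s, Tendsto (fun k => ‖S l i k‖ * ‖R s k (e j)‖) atTop (𝓝 0))
    (x : X) (hx : x ∈ Submodule.span ℂ (Set.range e))
    (y : Fin N → X) (hy : ∀ l, y l ∈ Submodule.span ℂ (Set.range e)) (ε : ℝ) (hε : 0 < ε) :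
    ∃ (z : X) (c : ℂ) (k : ℕ), dist z x < ε ∧ ∀ s, dist (c • R s k z) (y s) < ε := by
  choose Z hZ1 hZ2 hZ3 using fun l =>
    right_inverse_seq e R l (S l) (hS l) (hS0 l) (hS1 l) (y l) (hy l)
  have hAB : Tendsto (fun k => (∑ s, ‖R s k x‖) * ∑ l, ‖Z l k‖) atTop (𝓝 0) := by
    have h1 : Tendsto (fun k => ∑ s : Fin N, ∑ l : Fin N, ‖Z l k‖ * ‖R s k x‖) atTop
        (𝓝 (∑ s : Fin N, ∑ l : Fin N, 0)) :=
      tendsto_finsetSum _ fun s _ => tendsto_finsetSum _ fun l _ =>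
        span_right e R (Z l) s (fun j => hZ3 l j s) x hx
    simp only [Finset.sum_const_zero] at h1
    refine h1.congr fun k => ?_
    rw [Finset.sum_mul_sum]
    simp only [mul_comm]
  have hoff : ∀ s, Tendsto (fun k => ∑ l ∈ Finset.univ.erase s, R s k (Z l k)) atTop (𝓝 0) := by
    intro s
    have h1 : Tendsto (fun k => ∑ l ∈ Finset.univ.erase s, R s k (Z l k)) atTop
        (𝓝 (∑ l ∈ Finset.univ.erase s, 0)) :=
      tendsto_finsetSum _ fun l hl => hZ2 l s (Finset.ne_of_mem_erase hl).symm
    simpa using h1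
  have hε2 : 0 < ε / 2 := by positivity
  have ev1 : ∀ᶠ k in atTop, (∑ s, ‖R s k x‖) * ∑ l, ‖Z l k‖ < (ε / 2) ^ 2 :=
    hAB.eventually (gt_mem_nhds (by positivity))
  have ev2 : ∀ᶠ k in atTop, ∀ s, ‖∑ l ∈ Finset.univ.erase s, R s k (Z l k)‖ < ε / 2 := by
    rw [Filter.eventually_all]
    intro s
    have := (hoff s).norm
    rw [norm_zero] at this
    exact this.eventually (gt_mem_nhds hε2)
  obtain ⟨k, hk1, hk2⟩ := (ev1.and ev2).exists
  obtain ⟨t, ht, htA, htB⟩ := choose_scale _ _ (ε / 2) (by positivity) (by positivity) hε2 hk1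
  have htc : (t : ℂ) ≠ 0 := by exact_mod_cast ht.ne'
  refine ⟨x + (t : ℂ)⁻¹ • ∑ l, Z l k, (t : ℂ), k, ?_, fun s => ?_⟩
  · rw [dist_eq_norm, add_sub_cancel_left, norm_smul, norm_inv, Complex.norm_real,
      Real.norm_of_nonneg ht.le]
    calc t⁻¹ * ‖∑ l, Z l k‖ ≤ t⁻¹ * ∑ l, ‖Z l k‖ := by gcongr; exact norm_sum_le _ _
      _ < ε / 2 := htB
      _ < ε := by linarith
  · have h1 : (t : ℂ) • R s k (x + (t : ℂ)⁻¹ • ∑ l, Z l k) - y s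
        = (t : ℂ) • R s k x + ∑ l ∈ Finset.univ.erase s, R s k (Z l k) := by
      rw [map_add, smul_add, map_smul, smul_smul, mul_inv_cancel₀ htc, one_smul, map_sum,
        ← Finset.add_sum_erase Finset.univ _ (Finset.mem_univ s), hZ1]
      abel
    rw [dist_eq_norm, h1]
    have h2 : ‖(t : ℂ) • R s k x‖ < ε / 2 := by
      rw [norm_smul, Complex.norm_real, Real.norm_of_nonneg ht.le]
      refine lt_of_le_of_lt ?_ htA
      gcongr
      exact Finset.single_le_sum (f := fun s => ‖R s k x‖) (fun _ _ => norm_nonneg _)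
        (Finset.mem_univ s)
    have := norm_add_le ((t : ℂ) • R s k x) (∑ l ∈ Finset.univ.erase s, R s k (Z l k))
    have := hk2 s
    linarith

theorem baire_dense [CompleteSpace X] [TopologicalSpace.SeparableSpace X] (e : I → X)
    (hdense : Dense (Submodule.span ℂ (Set.range e) : Set X))
    {N : ℕ} (Q : Fin N → ℕ → X →L[ℂ] X)
    (h : ∀ x ∈ Submodule.span ℂ (Set.range e), ∀ y : Fin N → X,
      (∀ l, y l ∈ Submodule.span ℂ (Set.range e)) → ∀ ε : ℝ, 0 < ε →
      ∃ (z : X) (c : ℂ) (k : ℕ), dist z x < ε ∧ ∀ s, dist (c • Q s k z) (y s) < ε) :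
    Dense {x : X | Dense (Set.range fun p : ℂ × ℕ => fun l : Fin N => p.1 • Q l p.2 x)} := by
  have : SecondCountableTopology X := UniformSpace.secondCountable_of_separable X
  let B := TopologicalSpace.countableBasis (Fin N → X)
  have hBb : TopologicalSpace.IsTopologicalBasis B :=
    TopologicalSpace.isBasis_countableBasis _
  let G : Set (Fin N → X) → Set X := fun V =>
    ⋃ p : ℂ × ℕ, {x | (fun l : Fin N => p.1 • Q l p.2 x) ∈ V}
  have hGo : ∀ V ∈ B, IsOpen (G V) := by
    intro V hV
    refine isOpen_iUnion fun p => ?_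
    refine (hBb.isOpen hV).preimage ?_
    exact continuous_pi fun l => ((Q l p.2).continuous).const_smul p.1
  have hGd : ∀ V ∈ B, Dense (G V) := by
    intro V hV
    have hVne : V.Nonempty := TopologicalSpace.nonempty_of_mem_countableBasis hV
    rw [Metric.dense_iff]
    intro x₀ ρ hρ
    obtain ⟨x, hx, hxd⟩ := hdense.exists_dist_lt x₀ (half_pos hρ)
    have hYd : Dense (Set.pi Set.univ fun _ : Fin N => (Submodule.span ℂ (Set.range e) : Set X)) :=
      dense_pi _ fun _ _ => hdense
    obtain ⟨y, hyV, hy⟩ := hYd.inter_open_nonempty V (hBb.isOpen hV) hVne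
    obtain ⟨σ, hσ, hball⟩ := Metric.isOpen_iff.mp (hBb.isOpen hV) y hyV
    obtain ⟨z, c, k, hz, hs⟩ := h x hx y (fun l => hy l (Set.mem_univ l)) (min σ (ρ / 2))
      (by positivity)
    refine ⟨z, ?_, ?_⟩
    · rw [Metric.mem_ball]
      have h1 := dist_triangle z x x₀
      rw [dist_comm x x₀] at h1
      have := min_le_right σ (ρ / 2)
      linarith
    · refine Set.mem_iUnion.mpr ⟨(c, k), ?_⟩
      apply hball
      rw [Metric.mem_ball, dist_pi_lt_iff hσ]
      exact fun s => (hs s).trans_le (min_le_left _ _)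
  have hI : Dense (⋂ V ∈ B, G V) :=
    dense_biInter_of_isOpen hGo (TopologicalSpace.countable_countableBasis _) hGd
  refine hI.mono fun x hx => ?_
  rw [Set.mem_ofPred_eq, hBb.dense_iff]
  intro V hV _
  have := Set.mem_iInter₂.mp hx V hV
  obtain ⟨p, hp⟩ := Set.mem_iUnion.mp this
  exact ⟨_, hp, ⟨p, rfl⟩⟩

end helpers3

theorem stmt5
    {X : Type*} [NormedAddCommGroup X] [NormedSpace ℂ X] [CompleteSpace X]
    [TopologicalSpace.SeparableSpace X] (hinfdim : ¬ FiniteDimensional ℂ X)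
    {I : Type*} [Countable I] [Infinite I]
    (J : X →L[ℂ] (I → ℂ)) (hJ : Function.Injective J)
    (e : I → X) (he : ∀ i j : I, J (e i) j = if j = i then 1 else 0)
    (f : I → X →L[ℂ] ℂ) (hf : ∀ (i : I) (x : X), f i x = J x i)
    (hdense : Dense (Submodule.span ℂ (Set.range e) : Set X))
    (hOP : ∃ C : ℝ, ∀ i : I, ‖e i‖ * ‖f i‖ ≤ C)
    (φ : I → I) (hφ : Function.Injective φ)
    {N : ℕ} (hN : 2 ≤ N)
    (r : Fin N → ℕ) (hr1 : ∀ l, 1 ≤ r l) (hr : StrictMono r)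
    (b : Fin N → I → ℂ) (hb : ∀ l i, b l i ≠ 0)
    (T : Fin N → X →L[ℂ] X)
    (hT : ∀ (l : Fin N) (x : X) (i : I), J (T l x) i = b l i * J x (φ i)) :
    Dense {x : X | Dense (Set.range fun p : ℂ × ℕ =>
        fun l : Fin N => p.1 • (((T l) ^ (r l * p.2)) x))}
      ↔
    ((∀ i : I, ∀ M : ℕ, 1 ≤ M → φ^[M] i ≠ i) ∧
      ∃ n : ℕ → ℕ, StrictMono n ∧ (∀ k, 1 ≤ n k) ∧
        (∀ i j : I, ∀ l s : Fin N,
          Tendsto (fun k => ‖(∏ v ∈ Finset.range (r l * n k), b l (φ^[v] i))⁻¹ •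
                e (φ^[r l * n k] i)‖ *
              ‖backVec φ (b s) e (r s * n k) j‖) atTop (𝓝 0)) ∧
        (∀ i : I, ∀ s l : Fin N, s < l →
          Tendsto (fun k => ‖(∏ v ∈ Finset.range (r s * n k), b s (φ^[v] i))⁻¹ •
              backVec φ (b l) e (r l * n k) (φ^[r s * n k] i)‖) atTop (𝓝 0) ∧
          Tendsto (fun k => ‖(∏ v ∈ Finset.range (r l * n k), b l (φ^[v] i))⁻¹ •
              backVec φ (b s) e (r s * n k) (φ^[r l * n k] i)‖) atTop (𝓝 0))) := by
  constructor
  · intro hD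
    have hp : ∀ i : I, ∀ M : ℕ, 1 ≤ M → φ^[M] i ≠ i := by
      intro i M hM hi
      obtain ⟨x, hx⟩ := hD.nonempty
      choose c hc0 hc using fun l => coord_periodic J φ (b l) (hb l) (T l) (hT l) (r l) M i hi x
      have hl : (⟨0, by omega⟩ : Fin N) ≠ ⟨1, by omega⟩ := by simp
      generalize (⟨0, by omega⟩ : Fin N) = l₀ at hl
      generalize (⟨1, by omega⟩ : Fin N) = l₁ at hl
      rcases le_total ‖c l₀‖ ‖c l₁‖ with h | h
      · obtain ⟨K, hK0, hK⟩ := ratio_bound (fun n => J ((T l₀ ^ (r l₀ * n)) x) i)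
          (fun n => J ((T l₁ ^ (r l₁ * n)) x) i) _ _ M hM (hc l₀) (hc l₁) h (hc0 l₁)
        exact no_periodic_aux J e he (fun l n => ((T l) ^ (r l * n)) x) hx i l₀ l₁ hl K hK0 hK
      · obtain ⟨K, hK0, hK⟩ := ratio_bound (fun n => J ((T l₁ ^ (r l₁ * n)) x) i)
          (fun n => J ((T l₀ ^ (r l₀ * n)) x) i) _ _ M hM (hc l₁) (hc l₀) h (hc0 l₀)
        exact no_periodic_aux J e he (fun l n => ((T l) ^ (r l * n)) x) hx i l₁ l₀ hl.symm K hK0 hK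
    refine ⟨hp, ?_⟩
    obtain ⟨g, hg⟩ := exists_injective_nat I
    have hfin : ∀ k, (g ⁻¹' Set.Iic k).Finite := fun k => (Set.finite_Iic k).preimage hg.injOn
    have key := fun k m => key_forward hinfdim J e he f hf hOP φ hφ hN r hr1 hr.injective b hb T hT
      hD hp (hfin k).toFinset (1 / ((k : ℝ) + 1)) (by positivity) m
    obtain ⟨n, hn, hnk⟩ := Filter.extraction_forall_of_frequently (fun k => by
      rw [Filter.frequently_atTop]
      intro m
      obtain ⟨n, h1, h2⟩ := key k (max m 1)
      exact ⟨n, by omega, And.intro (show 1 ≤ n by omega) h2⟩)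
    have hmem : ∀ i k, g i ≤ k → i ∈ (hfin k).toFinset := by
      intro i k h
      simpa using h
    refine ⟨n, hn, fun k => (hnk k).1, ?_, ?_⟩
    · intro i j l s
      refine squeeze_zero' (Eventually.of_forall fun k => by positivity) ?_
        tendsto_one_div_add_atTop_nhds_zero_nat
      filter_upwards [eventually_ge_atTop (max (g i) (g j))] with k hk
      exact (hnk k).2.1 i (hmem i k (by omega)) j (hmem j k (by omega)) l s
    · intro i s l hsl
      constructor
      · refine squeeze_zero' (Eventually.of_forall fun k => by positivity) ?_
          tendsto_one_div_add_atTop_nhds_zero_nat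
        filter_upwards [eventually_ge_atTop (g i)] with k hk
        exact (hnk k).2.2 i (hmem i k hk) s l hsl.ne
      · refine squeeze_zero' (Eventually.of_forall fun k => by positivity) ?_
          tendsto_one_div_add_atTop_nhds_zero_nat
        filter_upwards [eventually_ge_atTop (g i)] with k hk
        exact (hnk k).2.2 i (hmem i k hk) l s hsl.ne'
  · rintro ⟨-, n, -, -, H1, H2⟩
    have hpe : ∀ l m j, (T l ^ m) (e j) = backVec φ (b l) e m j := fun l m j =>
      pow_e J hJ e he φ hφ (b l) (T l) (hT l) m j
    refine baire_dense e hdense (fun l k => (T l) ^ (r l * k)) ?_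
    intro x hx y hy ε hε
    obtain ⟨z, c, k, hz, hs⟩ := transit e (fun l k => (T l) ^ (r l * n k))
      (fun l i k => (∏ v ∈ Finset.range (r l * n k), b l (φ^[v] i))⁻¹ • e (φ^[r l * n k] i))
      (by
        intro l i k
        rw [map_smul, hpe, backVec_iter hφ, smul_smul, inv_mul_cancel₀, one_smul]
        exact Finset.prod_ne_zero_iff.mpr fun v _ => hb _ _)
      (by
        intro l i s hsl
        rw [tendsto_zero_iff_norm_tendsto_zero]
        simp only [map_smul, hpe]
        rcases lt_or_gt_of_ne hsl with h | h
        · exact (H2 i s l h).2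
        · exact (H2 i l s h).1)
      (by
        intro l i j s
        simp only [hpe]
        exact H1 i j l s)
      x hx y hy ε hε
    exact ⟨z, c, n k, hz, hs⟩
end

section
/- Let N ≥ 2 and for each 1 ≤ l ≤ N let T_l be the bilateral forward operator weighted shift on ℓ²(ℤ,K) with weight sequence (A_n^{(l)})_{n∈ℤ}, where each (A_n^{(l)})_{n∈ℤ} is a uniformly bounded sequence of positive invertible diagonal operators on K. Then for any integers 1 ≤ r₁ < r₂ < ⋯ < r_N the following are equivalent: (1) T₁^{r₁}, T₂^{r₂}, …, T_N^{r_N} are densely d-supercyclic; (2) there exists a strictly increasing sequence (n_k)_{k≥1} of positive integers such that: for every i₁, i₂ ∈ ℕ, j₁, j₂ ∈ ℤ and 1 ≤ l, s ≤ N, ‖(∏_{v=j₁−r_l n_k}^{j₁−1} (A_v^{(l)})^{−1}) f_{i₁}‖ · ‖(∏_{v=j₂}^{j₂+r_s n_k−1} A_v^{(s)}) f_{i₂}‖ → 0 as k → ∞; and for every i ∈ ℕ, j ∈ ℤ and 1 ≤ s < l ≤ N, ‖(∏_{v=j−r_s n_k}^{j−1} (A_v^{(s)})^{−1})(∏_{v=j−r_s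 n_k}^{j+(r_l−r_s)n_k−1} A_v^{(l)}) f_i‖ → 0 and ‖(∏_{v=j−r_l n_k}^{j−1} (A_v^{(l)})^{−1})(∏_{v=j−r_l n_k}^{j−(r_l−r_s)n_k−1} A_v^{(s)}) f_i‖ → 0 as k → ∞. -/
open Filter Topology

lemma Te_pow9 {X : Type*} [NormedAddCommGroup X] [NormedSpace ℂ X]
    (e : ℕ × ℤ → X) (T : X →L[ℂ] X) (a : ℕ → ℤ → ℝ)
    (hTe : ∀ i j, T (e (i, j)) = (a i j : ℂ) • e (i, j + 1)) (i : ℕ) (j : ℤ) (m : ℕ) :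
    (T ^ m) (e (i, j)) = ((∏ v ∈ Finset.Ico j (j + m), a i v : ℝ) : ℂ) • e (i, j + m) := by
  induction m with
  | zero => simp
  | succ m ih =>
    rw [pow_succ', mul_apply_eq_comp, ih, map_smul, hTe, smul_smul]
    have h : Finset.Ico j (j + (m + 1 : ℕ)) = insert (j + m : ℤ) (Finset.Ico j (j + m)) := by
      ext v; simp only [Finset.mem_Ico, Finset.mem_insert]; push_cast; omega
    rw [h, Finset.prod_insert (by simp)]
    push_cast
    rw [mul_comm, add_assoc]

lemma cT_pow9 {X : Type*} [NormedAddCommGroup X] [NormedSpace ℂ X]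
    (c : ℕ × ℤ → X → ℂ) (T : X →L[ℂ] X) (a : ℕ → ℤ → ℝ)
    (hcT : ∀ i j x, c (i, j + 1) (T x) = (a i j : ℂ) * c (i, j) x) (i : ℕ) (j : ℤ) (m : ℕ) (x : X) :
    c (i, j + m) ((T ^ m) x) = ((∏ v ∈ Finset.Ico j (j + m), a i v : ℝ) : ℂ) * c (i, j) x := by
  induction m with
  | zero => simp
  | succ m ih =>
    have h : Finset.Ico j (j + (m + 1 : ℕ)) = insert (j + m : ℤ) (Finset.Ico j (j + m)) := by
      ext v; simp only [Finset.mem_Ico, Finset.mem_insert]; push_cast; omega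
    rw [h, Finset.prod_insert (by simp), pow_succ', mul_apply_eq_comp]
    have := hcT i (j + m) ((T ^ m) x)
    rw [ih] at this
    push_cast at this ⊢
    rw [← add_assoc, this, mul_assoc]

lemma dense_large9 {Y : Type*} [NormedAddCommGroup Y] [NormedSpace ℂ Y] (w : ℕ → Y)
    (hne : ∀ v : Y, Submodule.span ℂ {v} ≠ ⊤)
    (hd : Dense (Set.range fun p : ℂ × ℕ => p.1 • w p.2)) (n0 : ℕ) :
    Dense {y | ∃ (z : ℂ) (n : ℕ), n0 ≤ n ∧ y = z • w n} := by
  induction n0 with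
  | zero =>
    refine hd.mono ?_
    rintro _ ⟨p, rfl⟩
    exact ⟨p.1, p.2, Nat.zero_le _, rfl⟩
  | succ n0 ih =>
    have h1 : Dense ((Submodule.span ℂ {w n0} : Set Y)ᶜ) := by
      rw [← interior_eq_empty_iff_dense_compl]
      by_contra h
      exact hne _ (Submodule.eq_top_of_nonempty_interior' _ (Set.nonempty_iff_ne_empty.2 h))
    have h2 : IsOpen ((Submodule.span ℂ {w n0} : Set Y)ᶜ) :=
      (Submodule.closed_of_finiteDimensional _).isOpen_compl
    refine (ih.inter_of_isOpen_right h1 h2).mono ?_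
    rintro _ ⟨⟨z, n, hn, rfl⟩, h⟩
    refine ⟨z, n, ?_, rfl⟩
    rcases hn.eq_or_lt with rfl | hh
    · exact absurd (Submodule.smul_mem _ z (Submodule.mem_span_singleton_self _)) h
    · exact hh

lemma fwd9 {X : Type*} [NormedAddCommGroup X] [NormedSpace ℂ X]
    (e : ℕ × ℤ → X) (c : ℕ × ℤ → X →L[ℂ] ℂ)
    (hc : ∀ p x, ‖c p x‖ ≤ ‖x‖) (hce : ∀ p q, c p (e q) = if p = q then 1 else 0)
    {N : ℕ} (hN : 2 ≤ N)
    (r : Fin N → ℕ) (hr1 : ∀ l, 1 ≤ r l) (hr : StrictMono r)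
    (a : Fin N → ℕ → ℤ → ℝ) (ha : ∀ (l : Fin N) (k : ℕ) (m : ℤ), 0 < a l k m)
    (T : Fin N → X →L[ℂ] X)
    (hcT : ∀ l i j x, c (i, j + 1) (T l x) = (a l i j : ℂ) * c (i, j) x)
    (H : Dense {x : X | Dense (Set.range fun p : ℂ × ℕ =>
        fun l : Fin N => p.1 • (((T l) ^ (r l * p.2)) x))}) :
    ∃ n : ℕ → ℕ, StrictMono n ∧ ∀ k, (1 ≤ n k ∧
      (∀ i₁ i₂ : ℕ, ∀ j₁ j₂ : ℤ, ∀ l s : Fin N, i₁ ≤ k → i₂ ≤ k → |j₁| ≤ k → |j₂| ≤ k →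
        (∏ v ∈ Finset.Ico (j₁ - (r l * n k : ℕ)) j₁, a l i₁ v)⁻¹ *
          (∏ v ∈ Finset.Ico j₂ (j₂ + (r s * n k : ℕ)), a s i₂ v) ≤ 2 / (k + 2 : ℝ)) ∧
      (∀ i : ℕ, ∀ j : ℤ, ∀ s l : Fin N, i ≤ k → |j| ≤ k → s ≠ l →
        (∏ v ∈ Finset.Ico (j - (r s * n k : ℕ)) j, a s i v)⁻¹ *
          (∏ v ∈ Finset.Ico (j - (r s * n k : ℕ)) (j - (r s * n k : ℕ) + (r l * n k : ℕ)), a l i v)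
            ≤ 2 / (k + 2 : ℝ))) := by
  refine extraction_forall_of_frequently (P := fun k n => (1 ≤ n ∧
      (∀ i₁ i₂ : ℕ, ∀ j₁ j₂ : ℤ, ∀ l s : Fin N, i₁ ≤ k → i₂ ≤ k → |j₁| ≤ k → |j₂| ≤ k →
        (∏ v ∈ Finset.Ico (j₁ - (r l * n : ℕ)) j₁, a l i₁ v)⁻¹ *
          (∏ v ∈ Finset.Ico j₂ (j₂ + (r s * n : ℕ)), a s i₂ v) ≤ 2 / (k + 2 : ℝ)) ∧
      (∀ i : ℕ, ∀ j : ℤ, ∀ s l : Fin N, i ≤ k → |j| ≤ k → s ≠ l →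
        (∏ v ∈ Finset.Ico (j - (r s * n : ℕ)) j, a s i v)⁻¹ *
          (∏ v ∈ Finset.Ico (j - (r s * n : ℕ)) (j - (r s * n : ℕ) + (r l * n : ℕ)), a l i v)
            ≤ 2 / (k + 2 : ℝ)))) ?_
  intro k
  rw [frequently_atTop]
  intro n0
  set F : Finset (ℕ × ℤ) := Finset.range (k + 1) ×ˢ Finset.Icc (-(k : ℤ)) k with hF
  have hFmem : ∀ i j, (i, j) ∈ F ↔ i ≤ k ∧ |j| ≤ k := by
    intro i j; simp [hF, abs_le, Nat.lt_succ_iff]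
  set y : X := ∑ p ∈ F, e p with hy
  have hcy : ∀ q, c q y = if q ∈ F then 1 else 0 := by
    intro q; simp [hy, hce]
  set δ : ℝ := 1 / (k + 2 : ℝ) with hδ
  have hδ0 : 0 < δ := by positivity
  have hδ1 : δ ≤ 1 / 2 := by
    rw [hδ]; apply one_div_le_one_div_of_le <;> norm_num
  have h2δ : 2 / (k + 2 : ℝ) = 2 * δ := by rw [hδ]; ring
  obtain ⟨x, hx, hxd⟩ := Metric.dense_iff.1 H y δ hδ0
  have hne : ∀ v : Fin N → X, Submodule.span ℂ {v} ≠ ⊤ := by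
    intro v hv
    have l0 : Fin N := ⟨0, by omega⟩
    have h0 : (fun _ => e (0, 0) : Fin N → X) ∈ Submodule.span ℂ {v} := by rw [hv]; trivial
    have h1 : (fun _ => e (0, 1) : Fin N → X) ∈ Submodule.span ℂ {v} := by rw [hv]; trivial
    rw [Submodule.mem_span_singleton] at h0 h1
    obtain ⟨α, hα⟩ := h0
    obtain ⟨β, hβ⟩ := h1
    have hα' := congrFun hα l0
    have hβ' := congrFun hβ l0
    have e1 := congrArg (c (0, 0)) hα'
    have e2 := congrArg (c (0, 1)) hα'
    have e3 := congrArg (c (0, 1)) hβ'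
    simp [hce] at e1 e2 e3
    rcases e2 with e2 | e2
    · simp [e2] at e1
    · simp [e2] at e3
  have hL := dense_large9 (fun n => fun l : Fin N => ((T l) ^ (r l * n)) x) hne hxd (n0 + 2 * k + 1)
  obtain ⟨w, hw, z, n, hn, rfl⟩ := Metric.dense_iff.1 hL (fun _ => y) δ hδ0
  refine ⟨n, by omega, by omega, ?_⟩
  have hx1 : ∀ q, ‖c q x - if q ∈ F then 1 else 0‖ < δ := by
    intro q
    rw [← hcy, ← map_sub]
    refine (hc _ _).trans_lt ?_
    rwa [← mem_ball_iff_norm]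
  have hw1 : ∀ (l : Fin N) (i : ℕ) (j : ℤ), ‖z * (((∏ v ∈ Finset.Ico j (j + (r l * n : ℕ)), a l i v : ℝ) : ℂ) * c (i, j) x)
      - if (i, j + (r l * n : ℕ)) ∈ F then 1 else 0‖ < δ := by
    intro l i j
    have h1 := cT_pow9 (fun p x => c p x) (T l) (a l) (hcT l) i j (r l * n) x
    rw [← hcy, ← h1, ← smul_eq_mul, ← map_smul, ← map_sub]
    refine (hc _ _).trans_lt ?_
    rw [mem_ball_iff_norm] at hw
    exact (norm_le_pi_norm _ l).trans_lt hw
  have hrn : ∀ l, n ≤ r l * n := fun l => Nat.le_mul_of_pos_left _ (hr1 l)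
  have hW0 : ∀ l i (s : Finset ℤ), 0 < ∏ v ∈ s, a l i v := fun l i s =>
    Finset.prod_pos fun v _ => ha l i v
  have hfw : ∀ (l : Fin N) (i : ℕ) (j : ℤ), i ≤ k → |j| ≤ k →
      ‖z‖ * (∏ v ∈ Finset.Ico j (j + (r l * n : ℕ)), a l i v) ≤ 2 * δ := by
    intro l i j hi hj
    have h1 := hw1 l i j
    rw [if_neg, sub_zero, norm_mul, norm_mul, Complex.norm_real, Real.norm_eq_abs,
      abs_of_pos (hW0 _ _ _)] at h1
    · have h2 := hx1 (i, j)
      rw [if_pos ((hFmem _ _).2 ⟨hi, hj⟩)] at h2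
      have h3 : 1 / 2 ≤ ‖c (i, j) x‖ := by
        have := norm_sub_norm_le (1 : ℂ) (c (i, j) x)
        rw [norm_sub_rev] at this
        simp at this
        linarith
      have := hW0 l i (Finset.Ico j (j + (r l * n : ℕ)))
      have h4 : 0 ≤ ‖z‖ * (∏ v ∈ Finset.Ico j (j + (r l * n : ℕ)), a l i v) := by positivity
      nlinarith
    · rw [hFmem]
      rintro ⟨-, h⟩
      have := hrn l
      rw [abs_le] at h hj
      omega
  have hbw : ∀ (l : Fin N) (i : ℕ) (j : ℤ), i ≤ k → |j| ≤ k →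
      1 / 2 ≤ ‖z‖ * ((∏ v ∈ Finset.Ico (j - (r l * n : ℕ)) j, a l i v) *
        ‖c (i, j - (r l * n : ℕ)) x‖) ∧ ‖c (i, j - (r l * n : ℕ)) x‖ ≤ δ := by
    intro l i j hi hj
    have h1 := hw1 l i (j - (r l * n : ℕ))
    rw [sub_add_cancel, if_pos ((hFmem _ _).2 ⟨hi, hj⟩)] at h1
    constructor
    · have := norm_sub_norm_le (1 : ℂ) (z * (((∏ v ∈ Finset.Ico (j - (r l * n : ℕ)) j, a l i v : ℝ) : ℂ) *
        c (i, j - (r l * n : ℕ)) x))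
      rw [norm_sub_rev, norm_one, norm_mul, norm_mul, Complex.norm_real, Real.norm_eq_abs,
        abs_of_pos (hW0 _ _ _)] at this
      linarith
    · have h2 := hx1 (i, j - (r l * n : ℕ))
      rw [if_neg, sub_zero] at h2
      · exact h2.le
      · rw [hFmem]
        rintro ⟨-, h⟩
        have := hrn l
        rw [abs_le] at h hj
        omega
  rw [h2δ]
  constructor
  · intro i₁ i₂ j₁ j₂ l s hi₁ hi₂ hj₁ hj₂
    have h1 := hfw s i₂ j₂ hi₂ hj₂
    obtain ⟨h2, h3⟩ := hbw l i₁ j₁ hi₁ hj₁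
    have hP := hW0 l i₁ (Finset.Ico (j₁ - (r l * n : ℕ)) j₁)
    have hQ := hW0 s i₂ (Finset.Ico j₂ (j₂ + (r s * n : ℕ)))
    generalize (∏ v ∈ Finset.Ico (j₁ - (r l * n : ℕ)) j₁, a l i₁ v) = P at *
    generalize (∏ v ∈ Finset.Ico j₂ (j₂ + (r s * n : ℕ)), a s i₂ v) = Q at *
    rw [inv_mul_le_iff₀ hP]
    have hzP : 0 ≤ ‖z‖ * P := by positivity
    have h4 : 1 / 2 ≤ ‖z‖ * P * δ := by nlinarith
    have h5 : Q ≤ 2 * (‖z‖ * P * δ) * Q := by nlinarith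
    have h6 : 2 * (‖z‖ * P * δ) * Q ≤ 2 * P * δ * (2 * δ) := by
      have : 0 ≤ 2 * P * δ := by positivity
      nlinarith [mul_le_mul_of_nonneg_left h1 this]
    have h7 : 2 * P * δ * (2 * δ) ≤ 2 * P * δ * 1 := by
      apply mul_le_mul_of_nonneg_left _ (by positivity); linarith
    linarith
  · intro i j s l hi hj hsl
    obtain ⟨h2, h3⟩ := hbw s i j hi hj
    have h1 := hw1 l i (j - (r s * n : ℕ))
    rw [if_neg, sub_zero, norm_mul, norm_mul, Complex.norm_real, Real.norm_eq_abs,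
      abs_of_pos (hW0 _ _ _)] at h1
    · have hP := hW0 s i (Finset.Ico (j - (r s * n : ℕ)) j)
      generalize (∏ v ∈ Finset.Ico (j - (r s * n : ℕ)) j, a s i v) = P at *
      generalize (∏ v ∈ Finset.Ico (j - (r s * n : ℕ)) (j - (r s * n : ℕ) + (r l * n : ℕ)), a l i v) = Q at *
      generalize ‖c (i, j - (r s * n : ℕ)) x‖ = t at *
      rw [inv_mul_le_iff₀ hP]
      have hzt : 0 < ‖z‖ * t := by nlinarith
      by_contra! h
      nlinarith
    · rw [hFmem]
      rintro ⟨-, h⟩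
      rw [abs_le] at h hj
      rcases lt_or_gt_of_ne hsl with hh | hh
      · have : (r s + 1) * n ≤ r l * n := Nat.mul_le_mul_right _ (hr hh)
        rw [add_mul] at this
        omega
      · have : (r l + 1) * n ≤ r s * n := Nat.mul_le_mul_right _ (hr hh)
        rw [add_mul] at this
        omega
lemma exists_scale9 {α β ε : ℝ} (hα : 0 ≤ α) (hβ : 0 ≤ β) (hε : 0 < ε) (h : α * β < ε * ε) :
    ∃ t : ℝ, 0 < t ∧ t * α < ε ∧ t⁻¹ * β < ε := by
  rcases hα.eq_or_lt with rfl | hα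
  · refine ⟨β / ε + 1, by positivity, by simpa using hε, ?_⟩
    rw [inv_mul_lt_iff₀ (by positivity)]
    have : β / ε * ε = β := by field_simp
    nlinarith
  · have h1 : β / ε < ε / α := by
      rw [div_lt_div_iff₀ hε hα]; linarith
    obtain ⟨t, ht1, ht2⟩ := exists_between h1
    have ht : 0 < t := lt_of_le_of_lt (by positivity) ht1
    refine ⟨t, ht, ?_, ?_⟩
    · rwa [lt_div_iff₀ hα] at ht2
    · rw [inv_mul_lt_iff₀ ht]
      rwa [div_lt_iff₀ hε] at ht1

lemma bwd9 {X : Type*} [NormedAddCommGroup X] [NormedSpace ℂ X]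
    (e : ℕ × ℤ → X) (he : ∀ p, ‖e p‖ = 1)
    {N : ℕ} (r : Fin N → ℕ)
    (a : Fin N → ℕ → ℤ → ℝ) (ha : ∀ (l : Fin N) (k : ℕ) (m : ℤ), 0 < a l k m)
    (T : Fin N → X →L[ℂ] X)
    (hTe : ∀ l i j, T l (e (i, j)) = (a l i j : ℂ) • e (i, j + 1))
    (n : ℕ → ℕ)
    (h1 : ∀ i₁ i₂ : ℕ, ∀ j₁ j₂ : ℤ, ∀ l s : Fin N,
        Tendsto (fun k => (∏ v ∈ Finset.Ico (j₁ - (r l * n k : ℕ)) j₁, a l i₁ v)⁻¹ *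
          (∏ v ∈ Finset.Ico j₂ (j₂ + (r s * n k : ℕ)), a s i₂ v)) atTop (𝓝 0))
    (h2 : ∀ i : ℕ, ∀ j : ℤ, ∀ s l : Fin N, s ≠ l →
        Tendsto (fun k => (∏ v ∈ Finset.Ico (j - (r s * n k : ℕ)) j, a s i v)⁻¹ *
          (∏ v ∈ Finset.Ico (j - (r s * n k : ℕ)) (j - (r s * n k : ℕ) + (r l * n k : ℕ)), a l i v))
          atTop (𝓝 0))
    (c : ℕ × ℤ →₀ ℂ) (d : Fin N → (ℕ × ℤ →₀ ℂ)) (ε : ℝ) (hε : 0 < ε) :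
    ∃ (x : X) (z : ℂ) (m : ℕ), ‖x - c.sum (fun p t => t • e p)‖ < ε ∧
      ∀ l, ‖z • ((T l) ^ (r l * m)) x - (d l).sum (fun p t => t • e p)‖ < 2 * ε := by
  classical
  have hW0 : ∀ l i (s : Finset ℤ), 0 < ∏ v ∈ s, a l i v := fun l i s =>
    Finset.prod_pos fun v _ => ha l i v
  set y : X := c.sum (fun p t => t • e p) with hy
  let Pi : Fin N → ℕ × ℤ → ℕ → ℝ := fun l p m =>
    (∏ v ∈ Finset.Ico (p.2 - (r l * m : ℕ)) p.2, a l p.1 v)⁻¹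
  let W : Fin N → ℕ × ℤ → ℕ → ℝ := fun l p m =>
    ∏ v ∈ Finset.Ico p.2 (p.2 + (r l * m : ℕ)), a l p.1 v
  have hPi : ∀ l p m, 0 ≤ Pi l p m := fun l p m => (inv_pos.2 (hW0 _ _ _)).le
  have hW : ∀ l p m, 0 ≤ W l p m := fun l p m => (hW0 _ _ _).le
  let S : Fin N → ℕ → X := fun l m =>
    (d l).sum (fun p t => t • ((Pi l p m : ℝ) : ℂ) • e (p.1, p.2 - (r l * m : ℕ)))
  let α : ℕ → ℝ := fun m => ∑ l, ∑ p ∈ c.support, ‖c p‖ * W l p m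
  let β : ℕ → ℝ := fun m => ∑ l, ∑ p ∈ (d l).support, ‖d l p‖ * Pi l p m
  have hα0 : ∀ m, 0 ≤ α m := fun m => Finset.sum_nonneg fun l _ => Finset.sum_nonneg fun p _ =>
    mul_nonneg (norm_nonneg _) (hW _ _ _)
  have hβ0 : ∀ m, 0 ≤ β m := fun m => Finset.sum_nonneg fun l _ => Finset.sum_nonneg fun p _ =>
    mul_nonneg (norm_nonneg _) (hPi _ _ _)
  have hTy : ∀ l m, ‖((T l) ^ (r l * m)) y‖ ≤ α m := by
    intro l m
    have : ‖((T l) ^ (r l * m)) y‖ ≤ ∑ p ∈ c.support, ‖c p‖ * W l p m := by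
      rw [hy, Finsupp.sum, map_sum]
      refine (norm_sum_le _ _).trans (Finset.sum_le_sum fun p _ => ?_)
      rw [map_smul, Te_pow9 e (T l) (a l) (hTe l) p.1 p.2, norm_smul, norm_smul, he, mul_one,
        Complex.norm_real, Real.norm_eq_abs, abs_of_pos (hW0 _ _ _)]
    refine this.trans ?_
    exact Finset.single_le_sum (f := fun l => ∑ p ∈ c.support, ‖c p‖ * W l p m)
      (fun l _ => Finset.sum_nonneg fun p _ =>
        mul_nonneg (norm_nonneg _) (hW _ _ _)) (Finset.mem_univ l)
  have hS : ∀ m, ‖∑ l, S l m‖ ≤ β m := by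
    intro m
    refine (norm_sum_le _ _).trans (Finset.sum_le_sum fun l _ => ?_)
    refine (norm_sum_le _ _).trans (Finset.sum_le_sum fun p _ => ?_)
    rw [norm_smul, norm_smul, he, mul_one, Complex.norm_real, Real.norm_eq_abs,
      abs_of_nonneg (hPi _ _ _)]
  have hTS : ∀ l s m, ((T l) ^ (r l * m)) (S s m) = (d s).sum (fun p t => t •
      ((Pi s p m * (∏ v ∈ Finset.Ico (p.2 - (r s * m : ℕ)) (p.2 - (r s * m : ℕ) + (r l * m : ℕ)),
        a l p.1 v) : ℝ) : ℂ) • e (p.1, p.2 - (r s * m : ℕ) + (r l * m : ℕ))) := by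
    intro l s m
    simp only [S, Finsupp.sum, map_sum, map_smul]
    refine Finset.sum_congr rfl fun p _ => ?_
    rw [Te_pow9 e (T l) (a l) (hTe l), smul_smul ((Pi s p m : ℝ) : ℂ)]
    push_cast
    rfl
  have hTSl : ∀ l m, ((T l) ^ (r l * m)) (S l m) = (d l).sum (fun p t => t • e p) := by
    intro l m
    rw [hTS]
    refine Finset.sum_congr rfl fun p _ => ?_
    simp only [sub_add_cancel, Pi]
    rw [inv_mul_cancel₀ (hW0 _ _ _).ne']
    simp
  have hcross : ∀ l s, s ≠ l → Tendsto (fun k => ((T l) ^ (r l * n k)) (S s (n k))) atTop (𝓝 0) := by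
    intro l s hsl
    simp only [hTS, Finsupp.sum]
    rw [← Finset.sum_const_zero (s := (d s).support)]
    refine tendsto_finsetSum _ fun p _ => ?_
    rw [tendsto_zero_iff_norm_tendsto_zero]
    simp only [norm_smul, he, mul_one, Complex.norm_real]
    rw [← mul_zero ‖d s p‖]
    refine Tendsto.const_mul _ ?_
    rw [← norm_zero (E := ℝ)]
    exact (h2 p.1 p.2 s l hsl).norm
  have hαβ : Tendsto (fun k => α (n k) * β (n k)) atTop (𝓝 0) := by
    simp only [α, β, Finset.sum_mul_sum]
    have : (0 : ℝ) = ∑ l : Fin N, ∑ s : Fin N, ∑ p ∈ c.support, ∑ q ∈ (d s).support, 0 := by simp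
    rw [this]
    refine tendsto_finsetSum _ fun l _ => tendsto_finsetSum _ fun s _ =>
      tendsto_finsetSum _ fun p _ => tendsto_finsetSum _ fun q _ => ?_
    have := (h1 q.1 p.1 q.2 p.2 s l).const_mul (‖c p‖ * ‖d s q‖)
    rw [mul_zero] at this
    refine this.congr fun k => ?_
    simp only [W, Pi]; ring
  have hcr : ∀ l, Tendsto (fun k => ∑ s ∈ Finset.univ.erase l, ((T l) ^ (r l * n k)) (S s (n k)))
      atTop (𝓝 0) := by
    intro l
    rw [← Finset.sum_const_zero (s := Finset.univ.erase l)]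
    exact tendsto_finsetSum _ fun s hs => hcross l s (Finset.ne_of_mem_erase hs)
  have hev : ∀ᶠ k in atTop, α (n k) * β (n k) < ε * ε ∧
      ∀ l, ‖∑ s ∈ Finset.univ.erase l, ((T l) ^ (r l * n k)) (S s (n k))‖ < ε := by
    refine (hαβ.eventually_lt_const (by positivity)).and (eventually_all.2 fun l => ?_)
    have := (hcr l).norm
    rw [norm_zero] at this
    exact this.eventually_lt_const hε
  obtain ⟨k, hk1, hk2⟩ := hev.exists
  obtain ⟨t, ht, ht1, ht2⟩ := exists_scale9 (hα0 _) (hβ0 _) hε hk1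
  have htn : ‖(t : ℂ)‖ = t := by simp [abs_of_pos ht]
  refine ⟨y + (t : ℂ)⁻¹ • ∑ l, S l (n k), t, n k, ?_, fun l => ?_⟩
  · rw [add_sub_cancel_left, norm_smul, norm_inv, htn]
    exact (mul_le_mul_of_nonneg_left (hS _) (by positivity)).trans_lt ht2
  · have : (t : ℂ) • ((T l) ^ (r l * n k)) (y + (t : ℂ)⁻¹ • ∑ l, S l (n k)) -
        (d l).sum (fun p t => t • e p) = (t : ℂ) • ((T l) ^ (r l * n k)) y +
        ∑ s ∈ Finset.univ.erase l, ((T l) ^ (r l * n k)) (S s (n k)) := by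
      rw [map_add, map_smul, smul_add, smul_inv_smul₀ (by exact_mod_cast ht.ne'), map_sum,
        ← Finset.add_sum_erase _ _ (Finset.mem_univ l), hTSl]
      abel
    rw [this]
    refine (norm_add_le _ _).trans_lt ?_
    rw [norm_smul, htn]
    have := mul_le_mul_of_nonneg_left (hTy l (n k)) ht.le
    linarith [hk2 l]

lemma dense9 {X : Type*} [NormedAddCommGroup X] [NormedSpace ℂ X] [CompleteSpace X]
    (e : ℕ × ℤ → X) (hed : Dense (Submodule.span ℂ (Set.range e) : Set X))
    {N : ℕ} (r : Fin N → ℕ) (T : Fin N → X →L[ℂ] X)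
    (H : ∀ (c : ℕ × ℤ →₀ ℂ) (d : Fin N → (ℕ × ℤ →₀ ℂ)) (ε : ℝ), 0 < ε →
      ∃ (x : X) (z : ℂ) (m : ℕ), ‖x - c.sum (fun p t => t • e p)‖ < ε ∧
      ∀ l, ‖z • ((T l) ^ (r l * m)) x - (d l).sum (fun p t => t • e p)‖ < 2 * ε) :
    Dense {x : X | Dense (Set.range fun p : ℂ × ℕ =>
        fun l : Fin N => p.1 • (((T l) ^ (r l * p.2)) x))} := by
  have hsep : TopologicalSpace.SeparableSpace X := by
    rw [← TopologicalSpace.isSeparable_univ_iff, ← hed.closure_eq]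
    exact ((Set.countable_range e).isSeparable.span (R := ℂ)).closure
  have hsc : SecondCountableTopology X := UniformSpace.secondCountable_of_separable X
  have hb := TopologicalSpace.isBasis_countableBasis (Fin N → X)
  set B := TopologicalSpace.countableBasis (Fin N → X) with hB
  have hset : {x : X | Dense (Set.range fun p : ℂ × ℕ =>
        fun l : Fin N => p.1 • (((T l) ^ (r l * p.2)) x))} =
      ⋂ V ∈ B, {x : X | ∃ p : ℂ × ℕ, (fun l : Fin N => p.1 • (((T l) ^ (r l * p.2)) x)) ∈ V} := by
    ext x
    simp only [Set.mem_ofPred_eq, Set.mem_iInter, hb.dense_iff]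
    constructor
    · intro h V hV
      obtain ⟨_, hv, p, rfl⟩ := h V hV (TopologicalSpace.nonempty_of_mem_countableBasis hV)
      exact ⟨p, hv⟩
    · intro h V hV _
      obtain ⟨p, hp⟩ := h V hV
      exact ⟨_, hp, p, rfl⟩
  rw [hset]
  refine dense_biInter_of_isOpen (fun V hV => ?_) (TopologicalSpace.countable_countableBasis _)
    (fun V hV => ?_)
  · rw [Set.ofPred_exists]
    refine isOpen_iUnion fun p => ?_
    refine (hb.isOpen hV).preimage ?_
    fun_prop
  · rw [Metric.dense_iff]
    intro x₀ ε hε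
    obtain ⟨z₀, hz₀⟩ := TopologicalSpace.nonempty_of_mem_countableBasis hV
    obtain ⟨η, hη, hηV⟩ := Metric.isOpen_iff.1 (hb.isOpen hV) z₀ hz₀
    set δ := min (ε / 2) (η / 4) with hδ
    have hδ0 : 0 < δ := by positivity
    have hap : ∀ u : X, ∃ c : ℕ × ℤ →₀ ℂ, ‖c.sum (fun p t => t • e p) - u‖ < δ := by
      intro u
      obtain ⟨y, hy, hys⟩ := Metric.dense_iff.1 hed u δ hδ0
      obtain ⟨c, rfl⟩ := Finsupp.mem_span_range_iff_exists_finsupp.1 hys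
      exact ⟨c, by rwa [mem_ball_iff_norm] at hy⟩
    obtain ⟨c, hc⟩ := hap x₀
    choose d hd using fun l => hap (z₀ l)
    obtain ⟨x, z, m, hx, hz⟩ := H c d δ hδ0
    have hδ1 : δ ≤ ε / 2 := min_le_left _ _
    have hδ2 : δ ≤ η / 4 := min_le_right _ _
    refine ⟨x, ?_, ⟨z, m⟩, hηV ?_⟩
    · rw [mem_ball_iff_norm]
      have := norm_sub_le_norm_sub_add_norm_sub x (c.sum (fun p t => t • e p)) x₀
      linarith
    · rw [mem_ball_iff_norm, pi_norm_lt_iff hη]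
      intro l
      have := norm_sub_le_norm_sub_add_norm_sub (z • ((T l) ^ (r l * m)) x)
        ((d l).sum (fun p t => t • e p)) (z₀ l)
      have h3 := hz l
      have h4 := hd l
      simp only [Pi.sub_apply]
      linarith

lemma span_dense9 {K : Type*} [NormedAddCommGroup K] [InnerProductSpace ℂ K]
    (f : ℕ → K) (hfdense : Dense (Submodule.span ℂ (Set.range f) : Set K)) :
    Dense (Submodule.span ℂ (Set.range fun p : ℕ × ℤ =>
      (lp.single 2 p.2 (f p.1) : lp (fun _ : ℤ => K) 2)) : Set (lp (fun _ : ℤ => K) 2)) := by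
  set E := Submodule.span ℂ (Set.range fun p : ℕ × ℤ =>
      (lp.single 2 p.2 (f p.1) : lp (fun _ : ℤ => K) 2)) with hE
  have h1 : ∀ (j : ℤ) (u : K), (lp.single 2 j u : lp (fun _ : ℤ => K) 2) ∈ E.topologicalClosure := by
    intro j u
    let L := lp.singleContinuousLinearMap ℂ (fun _ : ℤ => K) 2 j
    have hu : u ∈ closure (Submodule.span ℂ (Set.range f) : Set K) := hfdense u
    have hm : Set.MapsTo L (Submodule.span ℂ (Set.range f) : Set K) (E : Set _) := by
      intro v hv
      have : Submodule.span ℂ (Set.range f) ≤ E.comap L.toLinearMap := by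
        rw [Submodule.span_le]
        rintro _ ⟨i, rfl⟩
        exact Submodule.subset_span ⟨(i, j), rfl⟩
      exact this hv
    exact map_mem_closure L.continuous hu hm
  intro x
  have hx := lp.hasSum_single (E := fun _ : ℤ => K) (p := 2) (by norm_num) x
  refine E.isClosed_topologicalClosure.mem_of_tendsto hx (Eventually.of_forall fun s => ?_)
  exact Submodule.sum_mem _ fun j _ => h1 j _

theorem stmt9
    {K : Type*} [NormedAddCommGroup K] [InnerProductSpace ℂ K] [CompleteSpace K]
    (f : ℕ → K) (hf : Orthonormal ℂ f)
    (hfdense : Dense (Submodule.span ℂ (Set.range f) : Set K))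
    {N : ℕ} (hN : 2 ≤ N)
    (r : Fin N → ℕ) (hr1 : ∀ l, 1 ≤ r l) (hr : StrictMono r)
    (a : Fin N → ℕ → ℤ → ℝ) (ha : ∀ (l : Fin N) (k : ℕ) (m : ℤ), 0 < a l k m)
    (A : Fin N → ℤ → K →L[ℂ] K)
    (hA : ∀ (l : Fin N) (m : ℤ) (k : ℕ), A l m (f k) = (a l k m : ℂ) • f k)
    (hbd : ∀ l : Fin N, ∃ C : ℝ, ∀ m : ℤ, ‖A l m‖ ≤ C)
    (T : Fin N → lp (fun _ : ℤ => K) 2 →L[ℂ] lp (fun _ : ℤ => K) 2)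
    (hT : ∀ (l : Fin N) (x : lp (fun _ : ℤ => K) 2) (j : ℤ),
      (T l x : ∀ _ : ℤ, K) j = A l (j - 1) ((x : ∀ _ : ℤ, K) (j - 1))) :
    Dense {x : lp (fun _ : ℤ => K) 2 | Dense (Set.range fun p : ℂ × ℕ =>
        fun l : Fin N => p.1 • (((T l) ^ (r l * p.2)) x))}
      ↔
    ∃ n : ℕ → ℕ, StrictMono n ∧ (∀ k, 1 ≤ n k) ∧
      (∀ i₁ i₂ : ℕ, ∀ j₁ j₂ : ℤ, ∀ l s : Fin N,
        Tendsto (fun k =>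
            ‖(∏ v ∈ Finset.Ico (j₁ - (r l * n k : ℕ)) j₁, (a l i₁ v)⁻¹) • f i₁‖ *
            ‖(∏ v ∈ Finset.Ico j₂ (j₂ + (r s * n k : ℕ)), a s i₂ v) • f i₂‖)
          atTop (𝓝 0)) ∧
      (∀ i : ℕ, ∀ j : ℤ, ∀ s l : Fin N, s < l →
        Tendsto (fun k =>
            ‖((∏ v ∈ Finset.Ico (j - (r s * n k : ℕ)) j, (a s i v)⁻¹) *
              ∏ v ∈ Finset.Ico (j - (r s * n k : ℕ)) (j + ((r l - r s) * n k : ℕ)), a l i v) •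
              f i‖) atTop (𝓝 0) ∧
        Tendsto (fun k =>
            ‖((∏ v ∈ Finset.Ico (j - (r l * n k : ℕ)) j, (a l i v)⁻¹) *
              ∏ v ∈ Finset.Ico (j - (r l * n k : ℕ)) (j - ((r l - r s) * n k : ℕ)), a s i v) •
              f i‖) atTop (𝓝 0)) := by
  have hW0 : ∀ l i (s : Finset ℤ), 0 < ∏ v ∈ s, a l i v := fun l i s =>
    Finset.prod_pos fun v _ => ha l i v
  have hnf : ∀ i, ‖f i‖ = 1 := hf.1
  have hs1 : ∀ (j : ℤ) (s l : Fin N) (n : ℕ), s < l →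
      j + ((r l - r s) * n : ℕ) = j - (r s * n : ℕ) + (r l * n : ℕ) := by
    intro j s l n h
    have := (hr h).le
    push_cast [Nat.cast_sub this]; ring
  have hs2 : ∀ (j : ℤ) (s l : Fin N) (n : ℕ), s < l →
      j - ((r l - r s) * n : ℕ) = j - (r l * n : ℕ) + (r s * n : ℕ) := by
    intro j s l n h
    have := (hr h).le
    push_cast [Nat.cast_sub this]; ring
  have hn1 : ∀ (l s : Fin N) (i₁ i₂ : ℕ) (S₁ S₂ : Finset ℤ),
      ‖(∏ v ∈ S₁, (a l i₁ v)⁻¹) • f i₁‖ * ‖(∏ v ∈ S₂, a s i₂ v) • f i₂‖ =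
      (∏ v ∈ S₁, a l i₁ v)⁻¹ * ∏ v ∈ S₂, a s i₂ v := by
    intro l s i₁ i₂ S₁ S₂
    rw [norm_smul, norm_smul, hnf, hnf, mul_one, mul_one, Finset.prod_inv_distrib, norm_inv,
      Real.norm_of_nonneg (hW0 _ _ _).le, Real.norm_of_nonneg (hW0 _ _ _).le]
  have hn2 : ∀ (l s : Fin N) (i : ℕ) (S₁ S₂ : Finset ℤ),
      ‖((∏ v ∈ S₁, (a l i v)⁻¹) * (∏ v ∈ S₂, a s i v)) • f i‖ =
      (∏ v ∈ S₁, a l i v)⁻¹ * ∏ v ∈ S₂, a s i v := by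
    intro l s i S₁ S₂
    rw [norm_smul, norm_mul, hnf, mul_one, Finset.prod_inv_distrib, norm_inv,
      Real.norm_of_nonneg (hW0 _ _ _).le, Real.norm_of_nonneg (hW0 _ _ _).le]
  let e : ℕ × ℤ → lp (fun _ : ℤ => K) 2 := fun p => lp.single 2 p.2 (f p.1)
  have he : ∀ p, ‖e p‖ = 1 := fun p => by
    simp only [e]
    rw [lp.norm_single (by norm_num), hnf]
  have hTe : ∀ l i j, T l (e (i, j)) = (a l i j : ℂ) • e (i, j + 1) := by
    intro l i j
    apply lp.ext
    funext m
    rw [hT, lp.coeFn_smul, Pi.smul_apply]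
    simp only [e]
    by_cases h : m = j + 1
    · subst h
      rw [lp.single_apply_self, add_sub_cancel_right, lp.single_apply_self, hA]
    · rw [lp.single_apply_ne _ _ _ h, lp.single_apply_ne _ _ _ (by omega)]
      simp
  constructor
  · intro H
    let c : ℕ × ℤ → lp (fun _ : ℤ => K) 2 →L[ℂ] ℂ := fun p =>
      LinearMap.mkContinuous
        { toFun := fun x => inner ℂ (f p.1) ((x : ∀ _ : ℤ, K) p.2)
          map_add' := fun x y => by simp [inner_add_right]
          map_smul' := fun t x => by simp [inner_smul_right] } 1 (fun x => by
            refine (norm_inner_le_norm _ _).trans ?_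
            rw [hnf]
            exact mul_le_mul_of_nonneg_left (lp.norm_apply_le_norm (by norm_num) x p.2) zero_le_one)
    have hcdef : ∀ p x, c p x = inner ℂ (f p.1) ((x : ∀ _ : ℤ, K) p.2) := fun p x => rfl
    have hc : ∀ p x, ‖c p x‖ ≤ ‖x‖ := by
      intro p x
      rw [hcdef]
      refine (norm_inner_le_norm _ _).trans ?_
      rw [hnf, one_mul]
      exact lp.norm_apply_le_norm (by norm_num) x p.2
    have hce : ∀ p q, c p (e q) = if p = q then 1 else 0 := by
      rintro ⟨i, j⟩ ⟨i2, j2⟩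
      rw [hcdef]
      simp only [e]
      by_cases h : j = j2
      · subst h
        rw [lp.single_apply_self, orthonormal_iff_ite.1 hf]
        simp
      · rw [lp.single_apply_ne _ _ _ h, inner_zero_right, if_neg]
        simp [h]
    have hin : ∀ l m i (u : K), inner ℂ (f i) (A l m u) = (a l i m : ℂ) * inner ℂ (f i) u := by
      intro l m i u
      have : (innerSL ℂ (f i)).comp (A l m) = (a l i m : ℂ) • innerSL ℂ (f i) := by
        refine ContinuousLinearMap.ext_on hfdense ?_
        rintro _ ⟨q, rfl⟩
        simp only [ContinuousLinearMap.comp_apply, innerSL_apply_apply, hA, inner_smul_right,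
          smul_apply, smul_eq_mul, orthonormal_iff_ite.1 hf]
        split_ifs with h
        · rw [h]
        · simp
      simpa using DFunLike.congr_fun this u
    have hcT : ∀ l i j x, c (i, j + 1) (T l x) = (a l i j : ℂ) * c (i, j) x := by
      intro l i j x
      simp only [hcdef, hT, add_sub_cancel_right, hin]
    obtain ⟨n, hn, hP⟩ := fwd9 e c hc hce hN r hr1 hr a ha T hcT H
    have hlim : Tendsto (fun k : ℕ => 2 / (k + 2 : ℝ)) atTop (𝓝 0) :=
      Tendsto.const_div_atTop (tendsto_atTop_add_const_right _ _ tendsto_natCast_atTop_atTop) _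
    have hcross : ∀ i : ℕ, ∀ j : ℤ, ∀ s l : Fin N, s ≠ l →
        Tendsto (fun k => (∏ v ∈ Finset.Ico (j - (r s * n k : ℕ)) j, a s i v)⁻¹ *
          (∏ v ∈ Finset.Ico (j - (r s * n k : ℕ)) (j - (r s * n k : ℕ) + (r l * n k : ℕ)), a l i v))
          atTop (𝓝 0) := by
      intro i j s l hsl
      refine tendsto_of_tendsto_of_tendsto_of_le_of_le' tendsto_const_nhds hlim
        (Eventually.of_forall fun k => mul_nonneg (inv_pos.2 (hW0 _ _ _)).le (hW0 _ _ _).le) ?_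
      filter_upwards [eventually_ge_atTop i, eventually_ge_atTop j.natAbs] with k h1 h2
      exact (hP k).2.2 i j s l h1 (by rw [abs_le]; omega) hsl
    refine ⟨n, hn, fun k => (hP k).1, ?_, ?_⟩
    · intro i₁ i₂ j₁ j₂ l s
      simp only [hn1]
      refine tendsto_of_tendsto_of_tendsto_of_le_of_le' tendsto_const_nhds hlim
        (Eventually.of_forall fun k => mul_nonneg (inv_pos.2 (hW0 _ _ _)).le (hW0 _ _ _).le) ?_
      filter_upwards [eventually_ge_atTop i₁, eventually_ge_atTop i₂,
        eventually_ge_atTop j₁.natAbs, eventually_ge_atTop j₂.natAbs] with k h1 h2 h3 h4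
      exact (hP k).2.1 i₁ i₂ j₁ j₂ l s h1 h2 (by rw [abs_le]; omega) (by rw [abs_le]; omega)
    · intro i j s l hsl
      simp only [hn2, hs1 j s l _ hsl, hs2 j s l _ hsl]
      exact ⟨hcross i j s l hsl.ne, hcross i j l s hsl.ne'⟩
  · rintro ⟨n, hn, -, h1, h2⟩
    refine dense9 e (span_dense9 f hfdense) r T ?_
    refine bwd9 e he r a ha T hTe n ?_ ?_
    · intro i₁ i₂ j₁ j₂ l s
      have := h1 i₁ i₂ j₁ j₂ l s
      simpa only [hn1] using this
    · intro i j s l hsl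
      rcases lt_or_gt_of_ne hsl with h | h
      · have := (h2 i j s l h).1
        simpa only [hn2, hs1 j s l _ h] using this
      · have := (h2 i j l s h).2
        simpa only [hn2, hs2 j l s _ h] using this
end

section
/- Let T be the bilateral forward operator weighted shift on ℓ²(ℤ,K) with weight sequence (A_n)_{n∈ℤ}, where (A_n)_{n∈ℤ} is a uniformly bounded sequence of positive invertible diagonal operators on K, and suppose there exists m > 0 such that ‖A_n^{−1}‖ ≤ m for all n < 0, or ‖A_n^{−1}‖ ≤ m for all n > 0. Then for any integer N ≥ 2 the following are equivalent: (1) T, T², …, T^N are densely d-supercyclic; (2) there exists a strictly increasing sequence (n_k)_{k≥1} of positive integers such that: for every i₁, i₂ ∈ ℕ and every 1 ≤ l ≤ N, ‖(∏_{v=1}^{l n_k} (A_{−v})^{−1}) f_{i₁}‖ · ‖(∏_{v=1}^{N n_k} A_v) f_{i₂}‖ → 0 and ‖(∏_{v=1}^{N n_k} (A_{−v})^{−1}) f_{i₁}‖ · ‖(∏_{v=1}^{l n_k} A_v) f_{i₂}‖ → 0 as k → ∞; and for every i ∈ ℕ and every 1 ≤ l ≤ N−1, ‖(∏_{v=1}^{l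 n_k} (A_{−v})^{−1}) f_i‖ → 0 and ‖(∏_{v=1}^{l n_k} A_v) f_i‖ → 0 as k → ∞. -/
open Filter Topology

/-- potential -/
noncomputable def gpot (a : ℤ → ℝ) : ℤ → ℝ
  | Int.ofNat n => ∏ v ∈ Finset.range n, a (v : ℤ)
  | Int.negSucc n => ∏ v ∈ Finset.range (n + 1), (a (-((v : ℤ) + 1)))⁻¹

lemma gpot_pos (a : ℤ → ℝ) (ha : ∀ m, 0 < a m) (t : ℤ) : 0 < gpot a t := by
  cases t with
  | ofNat n => exact Finset.prod_pos fun v _ => ha _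
  | negSucc n => exact Finset.prod_pos fun v _ => inv_pos.2 (ha _)

lemma gpot_nat (a : ℤ → ℝ) (n : ℕ) : gpot a (n : ℤ) = ∏ v ∈ Finset.range n, a (v : ℤ) := rfl

lemma gpot_neg (a : ℤ → ℝ) (n : ℕ) :
    gpot a (-(n : ℤ)) = ∏ v ∈ Finset.range n, (a (-((v : ℤ) + 1)))⁻¹ := by
  cases n with
  | zero => simpa using gpot_nat a 0
  | succ n => rfl

lemma gpot_succ (a : ℤ → ℝ) (ha : ∀ m, 0 < a m) (t : ℤ) : gpot a (t + 1) = a t * gpot a t := by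
  rcases Int.eq_nat_or_neg t with ⟨n, rfl | rfl⟩
  · have : ((n : ℤ) + 1) = ((n + 1 : ℕ) : ℤ) := by push_cast; ring
    rw [this, gpot_nat, gpot_nat, Finset.prod_range_succ, mul_comm]
  · cases n with
    | zero =>
      have : (-((0:ℕ) : ℤ) + 1) = ((0 + 1 : ℕ) : ℤ) := by simp
      rw [this, gpot_nat, gpot_neg]; simp
    | succ n =>
      have : (-((n + 1 : ℕ) : ℤ) + 1) = -(n : ℤ) := by push_cast; ring
      rw [this, gpot_neg, gpot_neg, Finset.prod_range_succ]
      have h := (ha (-((n : ℤ) + 1))).ne'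
      push_cast
      field_simp

lemma gpot_zero (a : ℤ → ℝ) : gpot a 0 = 1 := by
  simpa using gpot_nat a 0

lemma gpot_prod_pos (a : ℤ → ℝ) (ha : ∀ m, 0 < a m) (n : ℕ) :
    ∏ v ∈ Finset.Icc 1 n, a (v : ℤ) = gpot a (1 + n) / gpot a 1 := by
  induction n with
  | zero => simp [(gpot_pos a ha 1).ne']
  | succ n ih =>
    rw [Finset.prod_Icc_succ_top (by omega), ih]
    have := gpot_succ a ha (1 + n)
    rw [show (1 + ((n + 1 : ℕ) : ℤ)) = 1 + n + 1 by push_cast; ring, this]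
    push_cast
    rw [add_comm (n : ℤ) 1]
    ring

lemma gpot_prod_neg (a : ℤ → ℝ) (n : ℕ) :
    ∏ v ∈ Finset.Icc 1 n, (a (-(v : ℤ)))⁻¹ = gpot a (-n) := by
  rw [gpot_neg]
  induction n with
  | zero => simp
  | succ n ih =>
    rw [Finset.prod_Icc_succ_top (by omega), ih, Finset.prod_range_succ]
    push_cast; rfl

lemma gpot_le_up (a : ℤ → ℝ) (ha : ∀ m, 0 < a m) (C : ℝ) (hC : ∀ m, a m ≤ C) (t : ℤ) (s : ℕ) :
    gpot a (t + s) ≤ C ^ s * gpot a t := by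
  induction s with
  | zero => simp
  | succ s ih =>
    have h0 : 0 < C := (ha 0).trans_le (hC 0)
    rw [show (t + ((s + 1 : ℕ) : ℤ)) = t + s + 1 by push_cast; ring, gpot_succ a ha, pow_succ]
    calc a (t + s) * gpot a (t + s) ≤ C * (C ^ s * gpot a t) :=
          mul_le_mul (hC _) ih (gpot_pos a ha _).le h0.le
      _ = _ := by ring

lemma gpot_le_down (a : ℤ → ℝ) (ha : ∀ m, 0 < a m) (c : ℝ) (hc : 0 < c) (t : ℤ) (s : ℕ)
    (h : ∀ m, t ≤ m → m < t + s → (a m)⁻¹ ≤ c) :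
    gpot a t ≤ c ^ s * gpot a (t + s) := by
  induction s with
  | zero => simp
  | succ s ih =>
    have ih' := ih fun m h1 h2 => h m h1 (by push_cast; omega)
    have h1 := h (t + s) (by omega) (by push_cast; omega)
    have h2 : 1 ≤ c * a (t + s) := by
      rw [inv_le_iff_one_le_mul₀ (ha _)] at h1
      linarith
    rw [show (t + ((s + 1 : ℕ) : ℤ)) = t + s + 1 by push_cast; ring, gpot_succ a ha, pow_succ]
    have h3 : 0 < c ^ s * gpot a (t + s) := mul_pos (pow_pos hc _) (gpot_pos a ha _)
    nlinarith

/-- the shifted sequence -/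
lemma exists_shifted {a : ℕ → ℤ → ℝ} (ha : ∀ k m, 0 < a k m) {C c : ℝ}
    (hC : ∀ k m, a k m ≤ C) (hc : 0 < c)
    (hinv : (∀ m : ℤ, m < 0 → ∀ k, (a k m)⁻¹ ≤ c) ∨ (∀ m : ℤ, 0 < m → ∀ k, (a k m)⁻¹ ≤ c))
    (n : ℕ → ℕ) (hn : StrictMono n) (q : ℕ) :
    ∃ n' : ℕ → ℕ, ∀ i : ℕ, ∀ j : ℤ, |j| ≤ q → ∀ l : ℕ, 1 ≤ l → ∃ D : ℝ, ∀ᶠ k in atTop,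
      gpot (a i) (j + (l * n' k : ℕ)) ≤ D * gpot (a i) (1 + (l * n k : ℕ)) ∧
      gpot (a i) (j - (l * n' k : ℕ)) ≤ D * gpot (a i) (-(l * n k : ℕ)) := by
  rcases hinv with h | h
  · refine ⟨fun k => n k + (q + 1), fun i j hj l hl => ?_⟩
    obtain ⟨hj1, hj2⟩ := abs_le.1 hj
    have hlm : (q : ℤ) + 1 ≤ l * (q + 1) := by nlinarith
    obtain ⟨s1, hs1⟩ := Int.eq_ofNat_of_zero_le (a := j + l * (q + 1) - 1) (by linarith)
    obtain ⟨s2, hs2⟩ := Int.eq_ofNat_of_zero_le (a := l * (q + 1) - j) (by linarith)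
    refine ⟨max (C ^ s1) (c ^ s2), Eventually.of_forall fun k => ⟨?_, ?_⟩⟩
    · have := gpot_le_up (a i) (ha i) C (hC i) (1 + (l * n k : ℕ)) s1
      rw [← hs1] at this
      refine (le_of_eq ?_).trans (this.trans ?_)
      · congr 1; push_cast; ring
      · exact mul_le_mul_of_nonneg_right (le_max_left _ _) (gpot_pos _ (ha i) _).le
    · have := gpot_le_down (a i) (ha i) c hc (j - (l * (n k + (q + 1)) : ℕ)) s2 (by
        intro m h1 h2
        apply h
        rw [← hs2] at h2; push_cast at h2
        have : (0:ℤ) ≤ l * n k := by positivity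
        linarith)
      rw [← hs2] at this
      refine this.trans ?_
      rw [show (j - (l * (n k + (q + 1)) : ℕ) + ((l:ℤ) * (q + 1) - j)) = -(l * n k : ℕ) by
        push_cast; ring]
      exact mul_le_mul_of_nonneg_right (le_max_right _ _) (gpot_pos _ (ha i) _).le
  · refine ⟨fun k => n k - (q + 1), fun i j hj l hl => ?_⟩
    obtain ⟨hj1, hj2⟩ := abs_le.1 hj
    have hlm : (q : ℤ) + 1 ≤ l * (q + 1) := by nlinarith
    obtain ⟨s1, hs1⟩ := Int.eq_ofNat_of_zero_le (a := 1 - j + l * (q + 1)) (by linarith)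
    obtain ⟨s2, hs2⟩ := Int.eq_ofNat_of_zero_le (a := l * (q + 1) + j) (by linarith)
    refine ⟨max (c ^ s1) (C ^ s2), ?_⟩
    filter_upwards [hn.tendsto_atTop.eventually_ge_atTop (2 * q + 2)] with k hk
    have hk' : ((n k - (q + 1) : ℕ) : ℤ) = n k - (q + 1) := by omega
    constructor
    · have := gpot_le_down (a i) (ha i) c hc (j + (l * (n k - (q + 1)) : ℕ)) s1 (by
        intro m h1 h2
        apply h
        push_cast at h1
        rw [hk'] at h1
        have : (1:ℤ) * (q + 1) ≤ l * (n k - (q + 1)) :=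
          mul_le_mul (by omega) (by omega) (by omega) (by omega)
        linarith)
      rw [← hs1] at this
      refine this.trans ?_
      rw [show (j + (l * (n k - (q + 1)) : ℕ) + (1 - j + (l:ℤ) * (q + 1))) = 1 + (l * n k : ℕ) by
        push_cast; rw [hk']; ring]
      exact mul_le_mul_of_nonneg_right (le_max_left _ _) (gpot_pos _ (ha i) _).le
    · have := gpot_le_up (a i) (ha i) C (hC i) (-(l * n k : ℕ)) s2
      rw [← hs2] at this
      refine (le_of_eq ?_).trans (this.trans ?_)
      · congr 1; push_cast; rw [hk']; ring
      · exact mul_le_mul_of_nonneg_right (le_max_right _ _) (gpot_pos _ (ha i) _).le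

/-- choice of the scalars -/
lemma exists_lam {ι : Type*} (F : Finset ι) (bp bm : ι → ℕ → ℝ)
    (hbp : ∀ s k, 0 < bp s k) (hbm : ∀ s k, 0 < bm s k)
    (h : ∀ s ∈ F, ∀ t ∈ F, Tendsto (fun k => bm s k * bp t k) atTop (𝓝 0)) :
    ∃ lam : ℕ → ℝ, (∀ k, 0 < lam k) ∧ ∀ s ∈ F, Tendsto (fun k => lam k * bp s k) atTop (𝓝 0) ∧
      Tendsto (fun k => (lam k)⁻¹ * bm s k) atTop (𝓝 0) := by
  rcases F.eq_empty_or_nonempty with rfl | hF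
  · exact ⟨fun _ => 1, fun _ => one_pos, by simp⟩
  set P : ℕ → ℝ := fun k => ∑ s ∈ F, bp s k with hP
  set Q : ℕ → ℝ := fun k => ∑ s ∈ F, bm s k with hQ
  have Pp : ∀ k, 0 < P k := fun k => Finset.sum_pos (fun s _ => hbp s k) hF
  have Qp : ∀ k, 0 < Q k := fun k => Finset.sum_pos (fun s _ => hbm s k) hF
  have hPQ : Tendsto (fun k => √(Q k * P k)) atTop (𝓝 0) := by
    have : Tendsto (fun k => Q k * P k) atTop (𝓝 0) := by
      simp only [hP, hQ, Finset.sum_mul_sum]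
      have := tendsto_finsetSum F fun s hs => tendsto_finsetSum F fun t ht => h s hs t ht
      simpa using this
    simpa using this.sqrt
  refine ⟨fun k => √(Q k / P k), fun k => Real.sqrt_pos.2 (div_pos (Qp k) (Pp k)), fun s hs => ?_⟩
  have e1 : ∀ k, √(Q k / P k) * P k = √(Q k * P k) := fun k => by
    rw [Real.sqrt_div (Qp k).le, Real.sqrt_mul (Qp k).le]
    have := Real.sqrt_pos.2 (Pp k)
    have h2 := Real.mul_self_sqrt (Pp k).le
    field_simp
    rw [sq, h2]
  have e2 : ∀ k, (√(Q k / P k))⁻¹ * Q k = √(Q k * P k) := fun k => by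
    rw [Real.sqrt_div (Qp k).le, Real.sqrt_mul (Qp k).le]
    have := Real.sqrt_pos.2 (Pp k)
    have := Real.sqrt_pos.2 (Qp k)
    have h2 := Real.mul_self_sqrt (Qp k).le
    field_simp
    nlinarith
  constructor
  · refine squeeze_zero (fun k => mul_nonneg (Real.sqrt_nonneg _) (hbp _ _).le) (fun k => ?_) hPQ
    rw [← e1]
    exact mul_le_mul_of_nonneg_left
      (Finset.single_le_sum (f := fun s => bp s k) (fun s _ => (hbp s k).le) hs) (Real.sqrt_nonneg _)
  · refine squeeze_zero (fun k => mul_nonneg (inv_nonneg.2 (Real.sqrt_nonneg _)) (hbm _ _).le)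
      (fun k => ?_) hPQ
    rw [← e2]
    exact mul_le_mul_of_nonneg_left
      (Finset.single_le_sum (f := fun s => bm s k) (fun s _ => (hbm s k).le) hs)
      (inv_nonneg.2 (Real.sqrt_nonneg _))

/-- Baire step -/
lemma dense_of_transitive {X : Type*} [NormedAddCommGroup X] [NormedSpace ℂ X] [CompleteSpace X]
    [TopologicalSpace.SeparableSpace X] (T : X →L[ℂ] X) (N : ℕ)
    (h : ∀ U : Set X, IsOpen U → U.Nonempty → ∀ V : Set (Fin N → X), IsOpen V → V.Nonempty →
      ∃ x ∈ U, ∃ p : ℂ × ℕ, (fun l : Fin N => p.1 • ((T ^ ((l.1 + 1) * p.2)) x)) ∈ V) :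
    Dense {x : X | Dense (Set.range fun p : ℂ × ℕ =>
        fun l : Fin N => p.1 • ((T ^ ((l.1 + 1) * p.2)) x))} := by
  have : SecondCountableTopology X := UniformSpace.secondCountable_of_separable X
  let B := TopologicalSpace.countableBasis (Fin N → X)
  have hB := TopologicalSpace.isBasis_countableBasis (Fin N → X)
  have hd : Dense (⋂ V ∈ B, {x : X | ∃ p : ℂ × ℕ,
      (fun l : Fin N => p.1 • ((T ^ ((l.1 + 1) * p.2)) x)) ∈ V}) := by
    refine dense_biInter_of_isOpen ?_ (TopologicalSpace.countable_countableBasis _) ?_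
    · intro V hV
      have : {x : X | ∃ p : ℂ × ℕ, (fun l : Fin N => p.1 • ((T ^ ((l.1 + 1) * p.2)) x)) ∈ V}
          = ⋃ p : ℂ × ℕ, (fun x => (fun l : Fin N => p.1 • ((T ^ ((l.1 + 1) * p.2)) x))) ⁻¹' V := by
        ext x; simp
      rw [this]
      refine isOpen_iUnion fun p => (hB.isOpen hV).preimage ?_
      fun_prop
    · intro V hV
      rw [dense_iff_inter_open]
      intro U hU hUn
      obtain ⟨x, hx, p, hp⟩ := h U hU hUn V (hB.isOpen hV)
        (TopologicalSpace.nonempty_of_mem_countableBasis hV)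
      exact ⟨x, hx, p, hp⟩
  refine hd.mono ?_
  intro x hx
  simp only [Set.mem_iInter] at hx
  rw [Set.mem_ofPred_eq, hB.dense_iff]
  intro V hV _
  obtain ⟨p, hp⟩ := hx V hV
  exact ⟨_, hp, p, rfl⟩

/-- shifted combination -/
noncomputable def Rsh {X : Type*} [NormedAddCommGroup X] [NormedSpace ℂ X] (u : ℕ → ℤ → X)
    (t : ℤ) : (ℕ × ℤ →₀ ℂ) →ₗ[ℂ] X :=
  Finsupp.linearCombination ℂ (fun s : ℕ × ℤ => u s.1 (s.2 + t))

lemma Rsh_T {X : Type*} [NormedAddCommGroup X] [NormedSpace ℂ X] (u : ℕ → ℤ → X)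
    (T : X →L[ℂ] X) (hT : ∀ i j, T (u i j) = u i (j + 1)) (m : ℕ) (t : ℤ) (c : ℕ × ℤ →₀ ℂ) :
    (T ^ m) (Rsh u t c) = Rsh u (t + m) c := by
  induction m with
  | zero => simp
  | succ m ih =>
    rw [pow_succ', mul_apply_eq_comp, ih]
    simp only [Rsh, Finsupp.linearCombination_apply, Finsupp.sum, map_sum, map_smul, hT]
    push_cast
    simp only [add_assoc]

lemma Rsh_tendsto {X : Type*} [NormedAddCommGroup X] [NormedSpace ℂ X] (u : ℕ → ℤ → X)
    (r : ℕ → ℝ) (t : ℕ → ℤ) (c : ℕ × ℤ →₀ ℂ)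
    (h : ∀ s ∈ c.support, Tendsto (fun k => |r k| * ‖u s.1 (s.2 + t k)‖) atTop (𝓝 0)) :
    Tendsto (fun k => (r k : ℂ) • Rsh u (t k) c) atTop (𝓝 0) := by
  simp only [Rsh, Finsupp.linearCombination_apply, Finsupp.sum, Finset.smul_sum]
  rw [← Finset.sum_const_zero (s := c.support)]
  refine tendsto_finsetSum _ fun s hs => ?_
  rw [tendsto_zero_iff_norm_tendsto_zero]
  have := (h s hs).const_mul ‖c s‖
  rw [mul_zero] at this
  refine this.congr fun k => ?_
  rw [norm_smul, norm_smul, Complex.norm_real, Real.norm_eq_abs]; ring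

lemma transitive_of {X : Type*} [NormedAddCommGroup X] [NormedSpace ℂ X] (u : ℕ → ℤ → X)
    (T : X →L[ℂ] X) (hT : ∀ i j, T (u i j) = u i (j + 1)) (N : ℕ)
    (hd : Dense (Submodule.span ℂ (Set.range fun s : ℕ × ℤ => u s.1 s.2) : Set X))
    (h : ∀ q : ℕ, ∃ n : ℕ → ℕ, ∃ lam : ℕ → ℝ, (∀ k, 0 < lam k) ∧
      ∀ i : ℕ, i ≤ q → ∀ j : ℤ, |j| ≤ q →
        (∀ l : ℕ, 1 ≤ l → l ≤ N →
          Tendsto (fun k => lam k * ‖u i (j + (l * n k : ℕ))‖) atTop (𝓝 0) ∧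
          Tendsto (fun k => (lam k)⁻¹ * ‖u i (j - (l * n k : ℕ))‖) atTop (𝓝 0)) ∧
        (∀ l : ℕ, 1 ≤ l → l ≤ N - 1 →
          Tendsto (fun k => ‖u i (j + (l * n k : ℕ))‖) atTop (𝓝 0) ∧
          Tendsto (fun k => ‖u i (j - (l * n k : ℕ))‖) atTop (𝓝 0)))
    (U : Set X) (hU : IsOpen U) (hUn : U.Nonempty) (V : Set (Fin N → X)) (hV : IsOpen V)
    (hVn : V.Nonempty) :
      ∃ x ∈ U, ∃ p : ℂ × ℕ, (fun l : Fin N => p.1 • ((T ^ ((l.1 + 1) * p.2)) x)) ∈ V := by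
  have hspan : (Submodule.span ℂ (Set.range fun s : ℕ × ℤ => u s.1 s.2) : Set X)
      = Set.range (Rsh u 0) := by
    rw [← Finsupp.range_linearCombination]
    simp [Rsh, LinearMap.coe_range]
  rw [hspan] at hd
  obtain ⟨_, hxU, ⟨c0, rfl⟩⟩ := hd.inter_open_nonempty U hU hUn
  have hd2 := dense_pi (Set.univ : Set (Fin N)) (s := fun _ => Set.range (Rsh u 0)) fun _ _ => hd
  obtain ⟨y, hyV, hy⟩ := hd2.inter_open_nonempty V hV hVn
  have hy' : ∀ l, ∃ c, Rsh u 0 c = y l := fun l => hy l trivial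
  choose c hc using hy'
  obtain ⟨q, hq⟩ : ∃ q : ℕ, ∀ s ∈ c0.support ∪ Finset.univ.biUnion (fun l => (c l).support),
      s.1 ≤ q ∧ |s.2| ≤ q := by
    refine ⟨(c0.support ∪ Finset.univ.biUnion (fun l => (c l).support)).sup
      (fun s => s.1 + s.2.natAbs), fun s hs => ?_⟩
    have := Finset.le_sup (f := fun s : ℕ × ℤ => s.1 + s.2.natAbs) hs
    rw [Int.abs_eq_natAbs]
    constructor <;> omega
  obtain ⟨n, lam, hlam, hh⟩ := h q
  have hq0 : ∀ s ∈ c0.support, s.1 ≤ q ∧ |s.2| ≤ q := fun s hs =>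
    hq s (Finset.mem_union_left _ hs)
  have hql : ∀ l, ∀ s ∈ (c l).support, s.1 ≤ q ∧ |s.2| ≤ q := fun l s hs =>
    hq s (Finset.mem_union_right _ (Finset.mem_biUnion.2 ⟨l, Finset.mem_univ _, hs⟩))
  set x : ℕ → X := fun k => Rsh u 0 c0 +
    ∑ l : Fin N, (((lam k)⁻¹ : ℝ) : ℂ) • Rsh u (-(((l.1 + 1) * n k : ℕ) : ℤ)) (c l) with hx
  have hx0 : Tendsto x atTop (𝓝 (Rsh u 0 c0)) := by
    have : Tendsto (fun k => ∑ l : Fin N,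
        (((lam k)⁻¹ : ℝ) : ℂ) • Rsh u (-(((l.1 + 1) * n k : ℕ) : ℤ)) (c l)) atTop
        (𝓝 (∑ l : Fin N, 0)) := by
      refine tendsto_finsetSum _ fun l _ => Rsh_tendsto u _ _ _ fun s hs => ?_
      have := ((hh s.1 (hql l s hs).1 s.2 (hql l s hs).2).1 (l.1 + 1) (by omega) (by omega)).2
      refine this.congr fun k => ?_
      rw [abs_of_pos (inv_pos.2 (hlam k)), sub_eq_add_neg]
    simpa [hx] using this.const_add (Rsh u 0 c0)
  have hTx : Tendsto (fun k => (fun l : Fin N => (lam k : ℂ) • ((T ^ ((l.1 + 1) * n k)) (x k))))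
      atTop (𝓝 y) := by
    rw [tendsto_pi_nhds]
    intro l
    have e : ∀ k, (lam k : ℂ) • ((T ^ ((l.1 + 1) * n k)) (x k)) =
        (lam k : ℂ) • Rsh u (((l.1 + 1) * n k : ℕ) : ℤ) c0 +
        ∑ l' : Fin N, Rsh u (-(((l'.1 + 1) * n k : ℕ) : ℤ) + ((l.1 + 1) * n k : ℕ)) (c l') := by
      intro k
      have hk : (lam k : ℂ) ≠ 0 := by exact_mod_cast (hlam k).ne'
      simp only [hx, map_add, map_sum, map_smul, smul_add, Rsh_T u T hT, zero_add,
        Finset.smul_sum, smul_smul]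
      congr 1
      refine Finset.sum_congr rfl fun l' _ => ?_
      push_cast
      rw [mul_inv_cancel₀ hk, one_smul]
    simp only [e]
    have h1 : Tendsto (fun k => (lam k : ℂ) • Rsh u (((l.1 + 1) * n k : ℕ) : ℤ) c0) atTop
        (𝓝 0) := by
      refine Rsh_tendsto u _ _ _ fun s hs => ?_
      have := ((hh s.1 (hq0 s hs).1 s.2 (hq0 s hs).2).1 (l.1 + 1) (by omega) (by omega)).1
      refine this.congr fun k => ?_
      rw [abs_of_pos (hlam k)]
    have h2 : Tendsto (fun k => ∑ l' : Fin N,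
        Rsh u (-(((l'.1 + 1) * n k : ℕ) : ℤ) + ((l.1 + 1) * n k : ℕ)) (c l')) atTop
        (𝓝 (∑ l' : Fin N, if l' = l then y l else 0)) := by
      refine tendsto_finsetSum _ fun l' _ => ?_
      split_ifs with hll
      · subst hll
        simp [hc]
      · have hne : l'.1 ≠ l.1 := fun h => hll (Fin.ext h)
        have key := Rsh_tendsto u (fun _ => 1)
          (fun k => (-(((l'.1 + 1) * n k : ℕ) : ℤ) + ((l.1 + 1) * n k : ℕ))) (c l') (fun s hs => by
            simp only [abs_one, one_mul]
            have hb := (hh s.1 (hql l' s hs).1 s.2 (hql l' s hs).2).2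
            rcases lt_or_gt_of_ne hne with hlt | hlt
            · refine (hb (l.1 - l'.1) (by omega) (by omega)).1.congr fun k => ?_
              congr 2
              push_cast [hlt.le]
              ring
            · refine (hb (l'.1 - l.1) (by omega) (by omega)).2.congr fun k => ?_
              congr 2
              push_cast [hlt.le]
              ring)
        simpa using key
    simpa using h1.add h2
  obtain ⟨k, hk1, hk2⟩ := ((hx0.eventually (hU.mem_nhds hxU)).and
    (hTx.eventually (hV.mem_nhds hyV))).exists
  exact ⟨x k, hk1, (lam k, n k), hk2⟩

section main
variable {K : Type*} [NormedAddCommGroup K] [InnerProductSpace ℂ K]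

lemma span_single_dense [CompleteSpace K] (f : ℕ → K)
    (hfdense : Dense (Submodule.span ℂ (Set.range f) : Set K)) (g : ℕ → ℤ → ℝ)
    (hg : ∀ i j, 0 < g i j) :
    Dense (Submodule.span ℂ (Set.range fun s : ℕ × ℤ =>
      (g s.1 s.2 : ℂ) • (lp.single 2 s.2 (f s.1) : lp (fun _ : ℤ => K) 2)) :
        Set (lp (fun _ : ℤ => K) 2)) := by
  rw [Submodule.dense_iff_topologicalClosure_eq_top, Submodule.topologicalClosure_eq_top_iff,
    Submodule.eq_bot_iff]
  intro x hx
  rw [Submodule.mem_orthogonal] at hx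
  have h1 : ∀ i j, inner ℂ (f i) (x j) = 0 := by
    intro i j
    have := hx _ (Submodule.subset_span ⟨(i, j), rfl⟩)
    simp only [inner_smul_left, lp.inner_single_left] at this
    have hne := (hg i j).ne'
    simpa [hne] using this
  ext j
  have h2 : x j ∈ (Submodule.span ℂ (Set.range f))ᗮ := by
    rw [Submodule.mem_orthogonal]
    intro v hv
    induction hv using Submodule.span_induction with
    | mem v hv => obtain ⟨i, rfl⟩ := hv; exact h1 i j
    | zero => simp
    | add v w _ _ h3 h4 => rw [inner_add_left, h3, h4, add_zero]
    | smul r v _ h3 => rw [inner_smul_left, h3, mul_zero]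
  rw [Submodule.dense_iff_topologicalClosure_eq_top, Submodule.topologicalClosure_eq_top_iff]
    at hfdense
  rw [hfdense] at h2
  simpa using h2

lemma T_single (A : ℤ → K →L[ℂ] K)
    (T : lp (fun _ : ℤ => K) 2 →L[ℂ] lp (fun _ : ℤ => K) 2)
    (hT : ∀ (x : lp (fun _ : ℤ => K) 2) (j : ℤ),
      (T x : ∀ _ : ℤ, K) j = A (j - 1) ((x : ∀ _ : ℤ, K) (j - 1))) (j : ℤ) (v : K) :
    T (lp.single 2 j v) = lp.single 2 (j + 1) (A j v) := by
  ext t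
  rw [hT]
  by_cases h : t = j + 1
  · subst h
    rw [lp.single_apply_self, add_sub_cancel_right, lp.single_apply_self]
  · rw [lp.single_apply_ne _ _ _ h, lp.single_apply_ne _ _ _ (by omega), map_zero]

lemma inner_A (f : ℕ → K) (hf : Orthonormal ℂ f)
    (hfdense : Dense (Submodule.span ℂ (Set.range f) : Set K))
    (a : ℕ → ℝ) (A : K →L[ℂ] K) (hA : ∀ (k : ℕ), A (f k) = (a k : ℂ) • f k) (i : ℕ) (v : K) :
    inner ℂ (f i) (A v) = (a i : ℂ) * inner ℂ (f i) v := by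
  have : (innerSL ℂ (f i)).comp A = (a i : ℂ) • innerSL ℂ (f i) := by
    refine ContinuousLinearMap.ext_on hfdense ?_
    rintro _ ⟨k, rfl⟩
    simp only [ContinuousLinearMap.comp_apply, hA, map_smul, smul_apply,
      innerSL_apply_apply, smul_eq_mul]
    rw [orthonormal_iff_ite.1 hf]
    split_ifs with h
    · rw [h]
    · simp
  simpa using congrArg (fun L => L v) this

lemma coord_pow (f : ℕ → K) (hf : Orthonormal ℂ f)
    (hfdense : Dense (Submodule.span ℂ (Set.range f) : Set K))
    (a : ℕ → ℤ → ℝ) (ha : ∀ (k : ℕ) (m : ℤ), 0 < a k m)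
    (A : ℤ → K →L[ℂ] K) (hA : ∀ (m : ℤ) (k : ℕ), A m (f k) = (a k m : ℂ) • f k)
    (T : lp (fun _ : ℤ => K) 2 →L[ℂ] lp (fun _ : ℤ => K) 2)
    (hT : ∀ (x : lp (fun _ : ℤ => K) 2) (j : ℤ),
      (T x : ∀ _ : ℤ, K) j = A (j - 1) ((x : ∀ _ : ℤ, K) (j - 1)))
    (x : lp (fun _ : ℤ => K) 2) (i : ℕ) (j : ℤ) (m : ℕ) :
    ‖(inner ℂ (f i) ((T ^ m) x (j + m)) : ℂ)‖ * gpot (a i) j =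
      gpot (a i) (j + m) * ‖(inner ℂ (f i) (x j) : ℂ)‖ := by
  induction m with
  | zero => simp [mul_comm]
  | succ m ih =>
    rw [pow_succ', mul_apply_eq_comp, hT,
      show (j + ((m + 1 : ℕ) : ℤ)) = j + m + 1 by push_cast; ring, add_sub_cancel_right,
      inner_A f hf hfdense (fun k => a k (j + m)) (A (j + m)) (hA (j + m)), gpot_succ _ (ha i),
      norm_mul, Complex.norm_real, Real.norm_eq_abs, abs_of_pos (ha _ _), mul_assoc, ih, mul_assoc]

lemma coord_le (f : ℕ → K) (hf : Orthonormal ℂ f) (x : lp (fun _ : ℤ => K) 2) (i : ℕ) (j : ℤ) :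
    ‖(inner ℂ (f i) (x j) : ℂ)‖ ≤ ‖x‖ := by
  refine (norm_inner_le_norm _ _).trans ?_
  rw [hf.1 i, one_mul]
  exact lp.norm_apply_le_norm (by norm_num) x j

lemma forward_step (f : ℕ → K) (hf : Orthonormal ℂ f)
    (hfdense : Dense (Submodule.span ℂ (Set.range f) : Set K))
    (a : ℕ → ℤ → ℝ) (ha : ∀ (k : ℕ) (m : ℤ), 0 < a k m)
    (A : ℤ → K →L[ℂ] K) (hA : ∀ (m : ℤ) (k : ℕ), A m (f k) = (a k m : ℂ) • f k)
    (T : lp (fun _ : ℤ => K) 2 →L[ℂ] lp (fun _ : ℤ => K) 2)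
    (hT : ∀ (x : lp (fun _ : ℤ => K) 2) (j : ℤ),
      (T x : ∀ _ : ℤ, K) j = A (j - 1) ((x : ∀ _ : ℤ, K) (j - 1)))
    {N : ℕ} (hN : 2 ≤ N)
    (hd : Dense {x : lp (fun _ : ℤ => K) 2 | Dense (Set.range fun p : ℂ × ℕ =>
        fun l : Fin N => p.1 • ((T ^ ((l.1 + 1) * p.2)) x))})
    (q : ℕ) (δ : ℝ) (hδ : 0 < δ) (hδ2 : δ ≤ 1 / 2) :
    ∃ n : ℕ, 1 ≤ n ∧ ∃ r : ℝ, 0 ≤ r ∧ ∀ i ≤ q,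
      (∀ l : ℕ, 1 ≤ l → l ≤ N →
        r * (gpot (a i) (1 + (l * n : ℕ)) / gpot (a i) 1) ≤ 2 * δ ∧
        gpot (a i) (-(l * n : ℕ)) ≤ 2 * δ * r) ∧
      (∀ l : ℕ, 1 ≤ l → l ≤ N - 1 →
        gpot (a i) (1 + (l * n : ℕ)) / gpot (a i) 1 ≤ 2 * δ ∧
        gpot (a i) (-(l * n : ℕ)) ≤ 2 * δ) := by
  set w : K := ∑ i ∈ Finset.range (q + 1), f i with hw
  have hwi : ∀ i ≤ q, (inner ℂ (f i) w : ℂ) = 1 := by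
    intro i hi
    rw [hw, inner_sum]
    simp only [orthonormal_iff_ite.1 hf]
    rw [Finset.sum_ite_eq, if_pos (Finset.mem_range.2 (by omega))]
  set y : lp (fun _ : ℤ => K) 2 := lp.single 2 0 w + lp.single 2 1 w with hy
  have hy0 : y 0 = w := by simp [hy, lp.single_apply]
  have hy1 : y 1 = w := by simp [hy, lp.single_apply]
  have hyj : ∀ j : ℤ, j ≠ 0 → j ≠ 1 → y j = 0 := by
    intro j h0 h1
    simp [hy, lp.single_apply, h0, h1]
  obtain ⟨x, hx, hxd⟩ := Metric.dense_iff.1 hd y δ hδ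
  obtain ⟨_, hz, ⟨⟨lam, n⟩, rfl⟩⟩ := Metric.dense_iff.1 hxd
    (fun l : Fin N => ((l.1 + 1 : ℝ) : ℂ) • y) δ hδ
  rw [mem_ball_iff_norm] at hx hz
  set z : ℕ → lp (fun _ : ℤ => K) 2 := fun l => lam • ((T ^ ((l + 1) * n)) x) with hzdef
  have hz' : ∀ l < N, ‖z l - ((l + 1 : ℝ) : ℂ) • y‖ < δ := fun l hl =>
    (norm_le_pi_norm (_ : Fin N → lp (fun _ : ℤ => K) 2) (⟨l, hl⟩ : Fin N)).trans_lt hz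
  have cz : ∀ l < N, ∀ i j,
      ‖(inner ℂ (f i) (z l j) : ℂ) - ((l + 1 : ℝ) : ℂ) * inner ℂ (f i) (y j)‖ < δ := by
    intro l hl i j
    have := (coord_le f hf (z l - ((l + 1 : ℝ) : ℂ) • y) i j).trans_lt (hz' l hl)
    have e : (z l - ((l + 1 : ℝ) : ℂ) • y) j = z l j - ((l + 1 : ℝ) : ℂ) • y j := rfl
    rwa [e, inner_sub_right, inner_smul_right (f i) (y j)] at this
  have cx : ∀ i j, ‖(inner ℂ (f i) (x j) : ℂ) - inner ℂ (f i) (y j)‖ < δ := by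
    intro i j
    have := (coord_le f hf (x - y) i j).trans_lt hx
    rwa [lp.coeFn_sub, Pi.sub_apply, inner_sub_right] at this
  have big : ∀ l < N, ∀ i ≤ q, ∀ j, y j = w → 1 / 2 ≤ ‖(inner ℂ (f i) (z l j) : ℂ)‖ := by
    intro l hl i hi j hj
    have h1 := cz l hl i j
    rw [hj, hwi i hi, mul_one] at h1
    have h2 := norm_sub_norm_le (((l + 1 : ℝ) : ℂ)) (inner ℂ (f i) (z l j) : ℂ)
    rw [norm_sub_rev, Complex.norm_real, Real.norm_eq_abs, abs_of_pos (by positivity)] at h2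
    have : (0:ℝ) ≤ l := by positivity
    linarith
  have bigx : ∀ i ≤ q, ∀ j, y j = w → 1 / 2 ≤ ‖(inner ℂ (f i) (x j) : ℂ)‖ := by
    intro i hi j hj
    have h1 := cx i j
    rw [hj, hwi i hi] at h1
    have h2 := norm_sub_norm_le (1 : ℂ) (inner ℂ (f i) (x j) : ℂ)
    rw [norm_sub_rev, norm_one] at h2
    linarith
  have small : ∀ l < N, ∀ i, ∀ j : ℤ, j ≠ 0 → j ≠ 1 → ‖(inner ℂ (f i) (z l j) : ℂ)‖ ≤ δ := by
    intro l hl i j h0 h1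
    have := cz l hl i j
    rw [hyj j h0 h1] at this
    simpa using this.le
  have smallx : ∀ i, ∀ j : ℤ, j ≠ 0 → j ≠ 1 → ‖(inner ℂ (f i) (x j) : ℂ)‖ ≤ δ := by
    intro i j h0 h1
    have := cx i j
    rw [hyj j h0 h1] at this
    simpa using this.le
  have hn : 1 ≤ n := by
    by_contra hn
    have hn0 : n = 0 := by omega
    have h1 := cz 0 (by omega) 0 0
    have h2 := cz 1 (by omega) 0 0
    have e : z 0 = z 1 := by simp [hzdef, hn0]
    rw [e, hy0, hwi 0 (by omega)] at h1
    rw [hy0, hwi 0 (by omega)] at h2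
    have h3 := norm_sub_le_norm_sub_add_norm_sub ((((1:ℕ) + 1 : ℝ) : ℂ) * 1)
      (inner ℂ (f 0) (z 1 0) : ℂ) ((((0:ℕ) + 1 : ℝ) : ℂ) * 1)
    rw [norm_sub_rev _ (inner ℂ (f 0) (z 1 0) : ℂ)] at h3
    have h4 : ‖((((1:ℕ) + 1 : ℝ) : ℂ) * 1) - ((((0:ℕ) + 1 : ℝ) : ℂ) * 1)‖ = 1 := by
      norm_num
    linarith
  have pw := fun x i j m => coord_pow f hf hfdense a ha A hA T hT x i j m
  have gp := fun i => gpot_pos (a i) (ha i)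
  have r1 : ∀ l i j, ‖(inner ℂ (f i) (z l (j + ((l + 1) * n : ℕ))) : ℂ)‖ * gpot (a i) j =
      ‖lam‖ * (gpot (a i) (j + ((l + 1) * n : ℕ)) * ‖(inner ℂ (f i) (x j) : ℂ)‖) := by
    intro l i j
    rw [← pw, hzdef]
    simp only [lp.coeFn_smul, Pi.smul_apply, inner_smul_right, norm_mul]
    ring
  have r2 : ∀ l i j, ‖(inner ℂ (f i) (z l (j + (l * n : ℕ))) : ℂ)‖ * gpot (a i) j =
      gpot (a i) (j + (l * n : ℕ)) * ‖(inner ℂ (f i) (z 0 j) : ℂ)‖ := by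
    intro l i j
    have e : z l = (T ^ (l * n)) (z 0) := by
      simp only [hzdef, map_smul]
      rw [show (l + 1) * n = l * n + (0 + 1) * n by ring, pow_add, mul_apply_eq_comp]
    rw [← pw, e]
  refine ⟨n, hn, ‖lam‖, norm_nonneg _, fun i hi => ⟨fun l hl1 hl2 => ?_, fun l hl1 hl2 => ?_⟩⟩
  · obtain ⟨l, rfl⟩ : ∃ l', l = l' + 1 := ⟨l - 1, by omega⟩
    have hpos : (1:ℤ) ≤ ((l + 1) * n : ℕ) := by
      have : 1 ≤ (l + 1) * n := Nat.mul_pos (by omega) (by omega)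
      exact_mod_cast this
    constructor
    · have e := r1 l i 1
      have s := small l (by omega) i (1 + ((l + 1) * n : ℕ)) (by omega) (by omega)
      have b := bigx i hi 1 hy1
      rw [← mul_div_assoc, div_le_iff₀ (gp i 1)]
      have h5 : 0 ≤ ‖lam‖ * gpot (a i) (1 + ((l + 1) * n : ℕ)) :=
        mul_nonneg (norm_nonneg _) (gp _ _).le
      have h6 := mul_le_mul_of_nonneg_right s (gp i 1).le
      have h7 := mul_le_mul_of_nonneg_left b h5
      nlinarith
    · have e := r1 l i (-((l + 1) * n : ℕ))
      rw [neg_add_cancel, gpot_zero, one_mul] at e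
      have s := smallx i (-((l + 1) * n : ℕ)) (by omega) (by omega)
      have b := big l (by omega) i hi 0 hy0
      have h6 := mul_le_mul_of_nonneg_right b (gp i (-((l + 1) * n : ℕ))).le
      have h7 := mul_le_mul_of_nonneg_left s (norm_nonneg lam)
      nlinarith
  · have hpos : (1:ℤ) ≤ (l * n : ℕ) := by
      have : 1 ≤ l * n := Nat.mul_pos (by omega) (by omega)
      exact_mod_cast this
    constructor
    · have e := r2 l i 1
      have s := small l (by omega) i (1 + (l * n : ℕ)) (by omega) (by omega)
      have b := big 0 (by omega) i hi 1 hy1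
      rw [div_le_iff₀ (gp i 1)]
      have h6 := mul_le_mul_of_nonneg_right s (gp i 1).le
      have h7 := mul_le_mul_of_nonneg_left b (gp i (1 + (l * n : ℕ))).le
      nlinarith
    · have e := r2 l i (-(l * n : ℕ))
      rw [neg_add_cancel, gpot_zero, one_mul] at e
      have s := small 0 (by omega) i (-(l * n : ℕ)) (by omega) (by omega)
      have b := big l (by omega) i hi 0 hy0
      have h6 := mul_le_mul_of_nonneg_right b (gp i (-(l * n : ℕ))).le
      nlinarith

end main
theorem stmt10
    {K : Type*} [NormedAddCommGroup K] [InnerProductSpace ℂ K] [CompleteSpace K]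
    (f : ℕ → K) (hf : Orthonormal ℂ f)
    (hfdense : Dense (Submodule.span ℂ (Set.range f) : Set K))
    (a : ℕ → ℤ → ℝ) (ha : ∀ (k : ℕ) (m : ℤ), 0 < a k m)
    (A : ℤ → K →L[ℂ] K) (hA : ∀ (m : ℤ) (k : ℕ), A m (f k) = (a k m : ℂ) • f k)
    (hbd : ∃ C : ℝ, ∀ m : ℤ, ‖A m‖ ≤ C)
    (A' : ℤ → K →L[ℂ] K) (hA' : ∀ (m : ℤ) (k : ℕ), A' m (f k) = ((a k m)⁻¹ : ℂ) • f k)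
    (hinv : ∃ c : ℝ, 0 < c ∧
      ((∀ m : ℤ, m < 0 → ‖A' m‖ ≤ c) ∨ (∀ m : ℤ, 0 < m → ‖A' m‖ ≤ c)))
    (T : lp (fun _ : ℤ => K) 2 →L[ℂ] lp (fun _ : ℤ => K) 2)
    (hT : ∀ (x : lp (fun _ : ℤ => K) 2) (j : ℤ),
      (T x : ∀ _ : ℤ, K) j = A (j - 1) ((x : ∀ _ : ℤ, K) (j - 1)))
    {N : ℕ} (hN : 2 ≤ N) :
    Dense {x : lp (fun _ : ℤ => K) 2 | Dense (Set.range fun p : ℂ × ℕ =>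
        fun l : Fin N => p.1 • ((T ^ ((l.1 + 1) * p.2)) x))}
      ↔
    ∃ n : ℕ → ℕ, StrictMono n ∧ (∀ k, 1 ≤ n k) ∧
      (∀ i₁ i₂ : ℕ, ∀ l : ℕ, 1 ≤ l → l ≤ N →
        Tendsto (fun k =>
            ‖(∏ v ∈ Finset.Icc 1 (l * n k), (a i₁ (-(v : ℤ)))⁻¹) • f i₁‖ *
            ‖(∏ v ∈ Finset.Icc 1 (N * n k), a i₂ (v : ℤ)) • f i₂‖) atTop (𝓝 0) ∧
        Tendsto (fun k =>
            ‖(∏ v ∈ Finset.Icc 1 (N * n k), (a i₁ (-(v : ℤ)))⁻¹) • f i₁‖ *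
            ‖(∏ v ∈ Finset.Icc 1 (l * n k), a i₂ (v : ℤ)) • f i₂‖) atTop (𝓝 0)) ∧
      (∀ i : ℕ, ∀ l : ℕ, 1 ≤ l → l ≤ N - 1 →
        Tendsto (fun k =>
            ‖(∏ v ∈ Finset.Icc 1 (l * n k), (a i (-(v : ℤ)))⁻¹) • f i‖) atTop (𝓝 0) ∧
        Tendsto (fun k =>
            ‖(∏ v ∈ Finset.Icc 1 (l * n k), a i (v : ℤ)) • f i‖) atTop (𝓝 0)) := by
  have gp := fun i => gpot_pos (a i) (ha i)
  have hfn := hf.1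
  have nb : ∀ (i m : ℕ), ‖(∏ v ∈ Finset.Icc 1 m, (a i (-(v : ℤ)))⁻¹) • f i‖ = gpot (a i) (-(m : ℤ)) := by
    intro i m
    rw [norm_smul, hfn, mul_one, gpot_prod_neg, Real.norm_of_nonneg (gp _ _).le]
  have pb : ∀ (i m : ℕ), ‖(∏ v ∈ Finset.Icc 1 m, a i (v : ℤ)) • f i‖ =
      gpot (a i) (1 + (m : ℤ)) / gpot (a i) 1 := by
    intro i m
    rw [norm_smul, hfn, mul_one, gpot_prod_pos _ (ha i),
      Real.norm_of_nonneg (div_pos (gp _ _) (gp _ _)).le]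
  simp only [nb, pb]
  constructor
  · intro hd
    have key : ∀ k : ℕ, ∃ᶠ n in atTop, 1 ≤ n ∧ ∀ i₁ ≤ k, ∀ i₂ ≤ k,
        (∀ l l' : ℕ, 1 ≤ l → l ≤ N → 1 ≤ l' → l' ≤ N →
          gpot (a i₁) (-(l * n : ℕ)) * (gpot (a i₂) (1 + (l' * n : ℕ)) / gpot (a i₂) 1)
            ≤ 1 / ((k : ℝ) + 1)) ∧
        (∀ l : ℕ, 1 ≤ l → l ≤ N - 1 →
          gpot (a i₁) (-(l * n : ℕ)) ≤ 1 / ((k : ℝ) + 1) ∧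
          gpot (a i₁) (1 + (l * n : ℕ)) / gpot (a i₁) 1 ≤ 1 / ((k : ℝ) + 1)) := by
      intro k
      rw [frequently_atTop]
      intro M
      have hev : ∀ᶠ δ : ℝ in 𝓝[>] 0, 0 < δ ∧ δ < 1 / 2 ∧ 2 * δ < 1 / ((k : ℝ) + 1) ∧
          ∀ n ∈ Finset.range M, 2 * δ < gpot (a 0) (1 + (1 * n : ℕ)) / gpot (a 0) 1 := by
        have h2 : ∀ ε : ℝ, 0 < ε → ∀ᶠ δ : ℝ in 𝓝[>] 0, 2 * δ < ε := by
          intro ε hε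
          filter_upwards [Ioo_mem_nhdsGT (show (0:ℝ) < ε / 2 by positivity)] with δ hδ
          linarith [hδ.2]
        refine eventually_mem_nhdsWithin.and (Eventually.and ?_ (Eventually.and ?_ ?_))
        · filter_upwards [h2 1 one_pos] with δ h; linarith
        · exact h2 _ (by positivity)
        · rw [Filter.eventually_all_finset]
          intro n _
          exact h2 _ (div_pos (gp _ _) (gp _ _))
      obtain ⟨δ, hδ0, hδ1, hδ2, hδ3⟩ := hev.exists
      obtain ⟨n, hn, r, hr, hh⟩ := forward_step f hf hfdense a ha A hA T hT hN hd k δ hδ0 hδ1.le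
      refine ⟨n, ?_, hn, fun i₁ h1 i₂ h2 => ⟨fun l l' hl1 hl2 hl1' hl2' => ?_,
        fun l hl1 hl2 => ?_⟩⟩
      · by_contra hlt
        have := ((hh 0 (by omega)).2 1 le_rfl (by omega)).1
        exact absurd (hδ3 n (Finset.mem_range.2 (by omega))) (not_lt.2 this)
      · have A1 := ((hh i₁ h1).1 l hl1 hl2).2
        have A2 := ((hh i₂ h2).1 l' hl1' hl2').1
        have hp : 0 ≤ gpot (a i₂) (1 + (l' * n : ℕ)) / gpot (a i₂) 1 :=
          (div_pos (gp _ _) (gp _ _)).le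
        calc _ ≤ (2 * δ * r) * (gpot (a i₂) (1 + (l' * n : ℕ)) / gpot (a i₂) 1) :=
              mul_le_mul_of_nonneg_right A1 hp
          _ = 2 * δ * (r * (gpot (a i₂) (1 + (l' * n : ℕ)) / gpot (a i₂) 1)) := by ring
          _ ≤ 2 * δ * (2 * δ) := mul_le_mul_of_nonneg_left A2 (by linarith)
          _ ≤ 2 * δ := by nlinarith
          _ ≤ _ := hδ2.le
      · have B := (hh i₁ h1).2 l hl1 hl2
        exact ⟨B.2.trans hδ2.le, B.1.trans hδ2.le⟩
    obtain ⟨n, hn, hP⟩ := extraction_forall_of_frequently key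
    have lim := tendsto_one_div_add_atTop_nhds_zero_nat (𝕜 := ℝ)
    refine ⟨n, hn, fun k => (hP k).1, fun i₁ i₂ l hl1 hl2 => ⟨?_, ?_⟩, fun i l hl1 hl2 => ⟨?_, ?_⟩⟩
    · refine squeeze_zero' (Eventually.of_forall fun k =>
        (mul_pos (gp _ _) (div_pos (gp _ _) (gp _ _))).le) ?_ lim
      filter_upwards [eventually_ge_atTop (max i₁ i₂)] with k hk
      exact ((hP k).2 i₁ (by omega) i₂ (by omega)).1 l N hl1 hl2 (by omega) le_rfl
    · refine squeeze_zero' (Eventually.of_forall fun k =>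
        (mul_pos (gp _ _) (div_pos (gp _ _) (gp _ _))).le) ?_ lim
      filter_upwards [eventually_ge_atTop (max i₁ i₂)] with k hk
      exact ((hP k).2 i₁ (by omega) i₂ (by omega)).1 N l (by omega) le_rfl hl1 hl2
    · refine squeeze_zero' (Eventually.of_forall fun k => (gp _ _).le) ?_ lim
      filter_upwards [eventually_ge_atTop i] with k hk
      exact (((hP k).2 i hk i hk).2 l hl1 hl2).1
    · refine squeeze_zero' (Eventually.of_forall fun k => (div_pos (gp _ _) (gp _ _)).le) ?_ lim
      filter_upwards [eventually_ge_atTop i] with k hk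
      exact (((hP k).2 i hk i hk).2 l hl1 hl2).2
  · rintro ⟨n, hn, -, hb1, hb2⟩
    obtain ⟨C, hC⟩ := hbd
    obtain ⟨c, hc, hinv⟩ := hinv
    have haC : ∀ k m, a k m ≤ C := by
      intro k m
      have h1 := (A m).le_opNorm (f k)
      rw [hA, norm_smul, hfn, mul_one, mul_one, Complex.norm_real,
        Real.norm_of_nonneg (ha k m).le] at h1
      exact h1.trans (hC m)
    have hac : ∀ k m, (a k m)⁻¹ ≤ ‖A' m‖ := by
      intro k m
      have h1 := (A' m).le_opNorm (f k)
      rwa [hA', norm_smul, hfn, mul_one, mul_one, norm_inv, Complex.norm_real,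
        Real.norm_of_nonneg (ha k m).le] at h1
    have hinv' : (∀ m : ℤ, m < 0 → ∀ k, (a k m)⁻¹ ≤ c) ∨
        (∀ m : ℤ, 0 < m → ∀ k, (a k m)⁻¹ ≤ c) :=
      hinv.imp (fun h m hm k => (hac k m).trans (h m hm)) (fun h m hm k => (hac k m).trans (h m hm))
    set u : ℕ → ℤ → lp (fun _ : ℤ => K) 2 :=
      fun i j => (gpot (a i) j : ℂ) • (lp.single 2 j (f i) : lp (fun _ : ℤ => K) 2) with hu
    have hun : ∀ i j, ‖u i j‖ = gpot (a i) j := by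
      intro i j
      simp only [hu]
      rw [norm_smul, lp.norm_single (by norm_num), hfn, mul_one, Complex.norm_real,
        Real.norm_of_nonneg (gp _ _).le]
    have huT : ∀ i j, T (u i j) = u i (j + 1) := by
      intro i j
      simp only [hu]
      rw [map_smul, T_single A T hT, hA, lp.single_smul, smul_smul, gpot_succ _ (ha i)]
      push_cast
      rw [mul_comm]
    have hud := span_single_dense f hfdense (fun i j => gpot (a i) j) gp
    have hsep : TopologicalSpace.SeparableSpace (lp (fun _ : ℤ => K) 2) := by
      rw [← TopologicalSpace.isSeparable_univ_iff, ← hud.closure_eq]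
      exact ((Set.countable_range _).isSeparable.span (R := ℂ)).closure
    refine dense_of_transitive T N fun U hU hUn V hV hVn =>
      transitive_of u T huT N hud ?_ U hU hUn V hV hVn
    intro q
    obtain ⟨n', hn'⟩ := exists_shifted ha haC hc hinv' n hn q
    have hprod : ∀ i₁ i₂ l l' : ℕ, 1 ≤ l → l ≤ N → 1 ≤ l' → l' ≤ N →
        Tendsto (fun k => gpot (a i₁) (-(l * n k : ℕ)) *
          (gpot (a i₂) (1 + (l' * n k : ℕ)) / gpot (a i₂) 1)) atTop (𝓝 0) := by
      intro i₁ i₂ l l' h1 h2 h1' h2'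
      by_cases hl : l = N
      · subst hl
        exact (hb1 i₁ i₂ l' h1' h2').2
      by_cases hl' : l' = N
      · subst hl'
        exact (hb1 i₁ i₂ l h1 h2).1
      · simpa using (hb2 i₁ l h1 (by omega)).1.mul (hb2 i₂ l' h1' (by omega)).2
    obtain ⟨lam, hlam, hl⟩ := exists_lam (Finset.range (q + 1) ×ˢ Finset.Icc 1 N)
      (fun s k => gpot (a s.1) (1 + (s.2 * n k : ℕ)) / gpot (a s.1) 1)
      (fun s k => gpot (a s.1) (-(s.2 * n k : ℕ)))
      (fun s k => div_pos (gp _ _) (gp _ _)) (fun s k => gp _ _) (by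
        intro s hs t ht
        simp only [Finset.mem_product, Finset.mem_range, Finset.mem_Icc] at hs ht
        exact hprod s.1 t.1 s.2 t.2 hs.2.1 hs.2.2 ht.2.1 ht.2.2)
    have tr : ∀ (r v w : ℕ → ℝ) (D : ℝ), (∀ k, 0 ≤ r k) → (∀ k, 0 ≤ v k) →
        (∀ᶠ k in atTop, v k ≤ D * w k) → Tendsto (fun k => r k * w k) atTop (𝓝 0) →
        Tendsto (fun k => r k * v k) atTop (𝓝 0) := by
      intro r v w D hr hv hle hw
      have h0 := hw.const_mul D
      rw [mul_zero] at h0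
      refine squeeze_zero' (Eventually.of_forall fun k => mul_nonneg (hr k) (hv k)) ?_ h0
      filter_upwards [hle] with k hk
      calc r k * v k ≤ r k * (D * w k) := mul_le_mul_of_nonneg_left hk (hr k)
        _ = _ := by ring
    refine ⟨n', lam, hlam, fun i hi j hj => ⟨fun l hl1 hl2 => ?_, fun l hl1 hl2 => ?_⟩⟩
    · obtain ⟨D, hD⟩ := hn' i j hj l hl1
      obtain ⟨L1, L2⟩ := hl (i, l) (by
        simp only [Finset.mem_product, Finset.mem_range, Finset.mem_Icc]; omega)
      simp only [hun]
      refine ⟨tr _ _ _ (D * gpot (a i) 1) (fun k => (hlam k).le) (fun k => (gp _ _).le) ?_ L1,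
        tr _ _ _ D (fun k => (inv_pos.2 (hlam k)).le) (fun k => (gp _ _).le) ?_ L2⟩
      · filter_upwards [hD] with k hk
        refine hk.1.trans (le_of_eq ?_)
        have := (gp i 1).ne'
        field_simp
      · filter_upwards [hD] with k hk using hk.2
    · obtain ⟨D, hD⟩ := hn' i j hj l hl1
      obtain ⟨L2, L1⟩ := hb2 i l hl1 hl2
      simp only [hun]
      have R1 := tr (fun _ => 1) (fun k => gpot (a i) (j + (l * n' k : ℕ)))
        (fun k => gpot (a i) (1 + (l * n k : ℕ)) / gpot (a i) 1)
        (D * gpot (a i) 1) (fun k => zero_le_one) (fun k => (gp _ _).le) (by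
          filter_upwards [hD] with k hk
          refine hk.1.trans (le_of_eq ?_)
          have := (gp i 1).ne'
          field_simp) (by simpa only [one_mul] using L1)
      have R2 := tr (fun _ => 1) (fun k => gpot (a i) (j - (l * n' k : ℕ)))
        (fun k => gpot (a i) (-(l * n k : ℕ)))
        D (fun k => zero_le_one) (fun k => (gp _ _).le) (by
          filter_upwards [hD] with k hk using hk.2) (by simpa only [one_mul] using L2)
      simp only [one_mul] at R1 R2
      exact ⟨R1, R2⟩
end

section
/- For each s ∈ ℕ let C_s = {2^{2s+1}−(2s+1), …, 2^{2s+1}−1} and D_s = {2^{2s+1}, …, 2^{2s+1}+(2s+1)−1}, and set C = ∪_{s≥0} C_s, D = ∪_{s≥0} D_s, E = {−2^{2s+1} : s ∈ ℕ}. Define positive invertible diagonal operators (A_n)_{n∈ℤ} on K by: if n ∈ C then A_n f_k = (1/2) f_k for 0 ≤ k ≤ n and A_n f_k = f_k for k > n; if n ∈ D then A_n f_k = 2 f_k for 0 ≤ k ≤ n and A_n f_k = f_k for k > n; if n ∈ E then A_n f_k = 2 f_k for 0 ≤ k ≤ −n and A_n f_k = f_k for k > −n; and A_n f_k = f_k for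 all k if n ∈ ℤ \ (C ∪ D ∪ E). Let T be the bilateral forward operator weighted shift on ℓ²(ℤ,K) with weight sequence (A_n)_{n∈ℤ}. Then T and T² are densely d-supercyclic, i.e. the set of x ∈ ℓ²(ℤ,K) such that {λ·(T^n x, T^{2n} x) : λ ∈ ℂ, n ∈ ℕ} is dense in ℓ²(ℤ,K)² is dense in ℓ²(ℤ,K). -/
open Filter Topology

/-- `C = ⋃ₛ {2^{2s+1} - (2s+1), …, 2^{2s+1} - 1}` as a set of integers. -/
def Cset : Set ℤ :=
  ⋃ s : ℕ, Set.Icc ((2 : ℤ) ^ (2 * s + 1) - (2 * s + 1)) ((2 : ℤ) ^ (2 * s + 1) - 1)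

/-- `D = ⋃ₛ {2^{2s+1}, …, 2^{2s+1} + (2s+1) - 1}` as a set of integers. -/
def Dset : Set ℤ :=
  ⋃ s : ℕ, Set.Icc ((2 : ℤ) ^ (2 * s + 1)) ((2 : ℤ) ^ (2 * s + 1) + (2 * s + 1) - 1)

/-- `E = {-2^{2s+1} : s ∈ ℕ}` as a set of integers. -/
def Eset : Set ℤ := Set.range fun s : ℕ => -(2 : ℤ) ^ (2 * s + 1)

theorem aux_crit {X ι : Type*} [NormedAddCommGroup X] [NormedSpace ℂ X] [CompleteSpace X]
    [Countable ι] (T : X →L[ℂ] X) (g : ι → ℤ → X) (hg : ∀ i j, T (g i j) = g i (j + 1))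
    (hd : Dense (Submodule.span ℂ (Set.range fun p : ι × ℤ => g p.1 p.2) : Set X))
    (n : ℕ → ℕ)
    (h1 : ∀ i j, Tendsto (fun t => g i (j + n t)) atTop (𝓝 0))
    (h2 : ∀ i j, Tendsto (fun t => ((2 : ℂ) ^ t)⁻¹ • g i (j + 2 * n t)) atTop (𝓝 0))
    (h3 : ∀ i j, Tendsto (fun t => ((2 : ℂ) ^ t) • g i (j - n t)) atTop (𝓝 0))
    (h4 : ∀ i j, Tendsto (fun t => ((2 : ℂ) ^ t) • g i (j - 2 * n t)) atTop (𝓝 0)) :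
    Dense {x : X | Dense (Set.range fun p : ℂ × ℕ =>
      (p.1 • ((T ^ p.2) x), p.1 • ((T ^ (2 * p.2)) x)))} := by
  have hsc : ∀ t : ℕ, ((2 : ℂ) ^ t) ≠ 0 := fun t => pow_ne_zero _ two_ne_zero
  have hscinv : Tendsto (fun t : ℕ => ((2 : ℂ) ^ t)⁻¹) atTop (𝓝 0) := by
    have : Tendsto (fun t : ℕ => ((2 : ℂ)⁻¹) ^ t) atTop (𝓝 0) :=
      tendsto_pow_atTop_nhds_zero_of_norm_lt_one (by norm_num)
    simpa [inv_pow] using this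
  -- separability
  have hsep : TopologicalSpace.SeparableSpace X := by
    have hc : (Set.range fun p : ι × ℤ => g p.1 p.2).Countable := Set.countable_range _
    have h := (hc.isSeparable.span (R := ℂ)).closure
    rw [hd.closure_eq] at h
    exact TopologicalSpace.isSeparable_univ_iff.1 h
  have hsecond : SecondCountableTopology X := UniformSpace.secondCountable_of_separable X
  have hpow : ∀ i m j, (T ^ m) (g i j) = g i (j + (m : ℕ)) := by
    intro i m
    induction m with
    | zero => intro j; simp
    | succ m ih =>
      intro j
      rw [pow_succ, ContinuousLinearMap.mul_apply, hg, ih]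
      congr 1; push_cast; ring
  -- span predicates
  set S := Submodule.span ℂ (Set.range fun p : ι × ℤ => g p.1 p.2) with hS
  have P0 : ∀ x ∈ S, Tendsto (fun t => (T ^ n t) x) atTop (𝓝 0) ∧
      Tendsto (fun t => ((2 : ℂ) ^ t)⁻¹ • (T ^ (2 * n t)) x) atTop (𝓝 0) := by
    intro x hx
    induction hx using Submodule.span_induction with
    | mem x hx =>
      obtain ⟨⟨i, j⟩, rfl⟩ := hx
      simp only [hpow]
      exact ⟨h1 i j, by simpa using h2 i j⟩
    | zero => simp
    | add x y _ _ hx hy =>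
      exact ⟨by simpa using hx.1.add hy.1, by simpa using hx.2.add hy.2⟩
    | smul a x _ hx =>
      refine ⟨by simpa using hx.1.const_smul a, ?_⟩
      have := hx.2.const_smul a
      rw [smul_zero] at this
      refine this.congr fun t => ?_
      rw [map_smul, smul_comm]
  have P1 : ∀ x ∈ S, ∃ u : ℕ → X, (∀ t, (T ^ n t) (u t) = x) ∧
      Tendsto (fun t => ((2 : ℂ) ^ t) • u t) atTop (𝓝 0) := by
    intro x hx
    induction hx using Submodule.span_induction with
    | mem x hx =>
      obtain ⟨⟨i, j⟩, rfl⟩ := hx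
      exact ⟨fun t => g i (j - n t), fun t => by simp [hpow], h3 i j⟩
    | zero => exact ⟨0, by simp, by simp⟩
    | add x y _ _ hx hy =>
      obtain ⟨u, hu, hu'⟩ := hx
      obtain ⟨v, hv, hv'⟩ := hy
      exact ⟨u + v, fun t => by rw [Pi.add_apply, map_add, hu, hv], by simpa using hu'.add hv'⟩
    | smul a x _ hx =>
      obtain ⟨u, hu, hu'⟩ := hx
      refine ⟨fun t => a • u t, by simp [hu], ?_⟩
      have := hu'.const_smul a
      rw [smul_zero] at this
      refine this.congr fun t => ?_
      rw [smul_comm]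
  have P2 : ∀ x ∈ S, ∃ u : ℕ → X, (∀ t, (T ^ (2 * n t)) (u t) = x) ∧
      Tendsto (fun t => ((2 : ℂ) ^ t) • u t) atTop (𝓝 0) ∧
      Tendsto (fun t => (T ^ (n t)) (u t)) atTop (𝓝 0) := by
    intro x hx
    induction hx using Submodule.span_induction with
    | mem x hx =>
      obtain ⟨⟨i, j⟩, rfl⟩ := hx
      refine ⟨fun t => g i (j - 2 * n t), fun t => by simp [hpow], h4 i j, ?_⟩
      have := hscinv.smul (h3 i j)
      rw [smul_zero] at this
      refine this.congr fun t => ?_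
      rw [hpow, smul_smul, inv_mul_cancel₀ (hsc t), one_smul]
      congr 1; ring
    | zero => exact ⟨0, by simp, by simp, by simp⟩
    | add x y _ _ hx hy =>
      obtain ⟨u, hu, hu', hu2⟩ := hx
      obtain ⟨v, hv, hv', hv2⟩ := hy
      exact ⟨u + v, fun t => by rw [Pi.add_apply, map_add, hu, hv], by simpa using hu'.add hv', by simpa using hu2.add hv2⟩
    | smul a x _ hx =>
      obtain ⟨u, hu, hu', hu2⟩ := hx
      refine ⟨fun t => a • u t, by simp [hu], ?_, by simpa using hu2.const_smul a⟩
      have := hu'.const_smul a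
      rw [smul_zero] at this
      refine this.congr fun t => ?_
      rw [smul_comm]
  -- Baire
  let B := TopologicalSpace.countableBasis (X × X)
  have hB := TopologicalSpace.isBasis_countableBasis (X × X)
  let F : ℂ × ℕ → X → X × X := fun p x => (p.1 • ((T ^ p.2) x), p.1 • ((T ^ (2 * p.2)) x))
  have hF : ∀ p, Continuous (F p) := fun p => by fun_prop
  have hmain : Dense (⋂ b ∈ B, ⋃ p, F p ⁻¹' b) := by
    refine dense_biInter_of_isOpen (fun b hb => isOpen_iUnion fun p =>
      (hB.isOpen hb).preimage (hF p)) (TopologicalSpace.countable_countableBasis _) ?_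
    intro b hb
    obtain ⟨⟨q1, q2⟩, hq⟩ := TopologicalSpace.nonempty_of_mem_countableBasis hb
    have hbo := hB.isOpen hb
    obtain ⟨V1, V2, hV1, hV2, hq1, hq2, hVb⟩ := isOpen_prod_iff.1 hbo q1 q2 hq
    obtain ⟨y1, hy1V, hy1⟩ := hd.inter_open_nonempty V1 hV1 ⟨q1, hq1⟩
    obtain ⟨y2, hy2V, hy2⟩ := hd.inter_open_nonempty V2 hV2 ⟨q2, hq2⟩
    rw [dense_iff_inter_open]
    intro U hU hUne
    obtain ⟨x, hxU, hx⟩ := hd.inter_open_nonempty U hU hUne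
    obtain ⟨u, hu, hu'⟩ := P1 y1 hy1
    obtain ⟨v, hv, hv', hv2⟩ := P2 y2 hy2
    have hx0 := P0 x hx
    have hy0 := P0 y1 hy1
    let z : ℕ → X := fun t => x + (2 : ℂ) ^ t • u t + (2 : ℂ) ^ t • v t
    have hz : Tendsto z atTop (𝓝 x) := by
      simpa using (hu'.const_add x).add hv'
    have hz1 : Tendsto (fun t => ((2 : ℂ) ^ t)⁻¹ • (T ^ n t) (z t)) atTop (𝓝 y1) := by
      have := ((hscinv.smul hx0.1).add_const y1).add hv2
      simp only [smul_zero, zero_add, add_zero] at this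
      refine this.congr fun t => ?_
      simp only [z, map_add, map_smul, smul_add, smul_smul, inv_mul_cancel₀ (hsc t), one_smul, hu]
    have hz2 : Tendsto (fun t => ((2 : ℂ) ^ t)⁻¹ • (T ^ (2 * n t)) (z t)) atTop (𝓝 y2) := by
      have := (hx0.2.add hy0.1).add_const y2
      simp only [zero_add, add_zero] at this
      refine this.congr fun t => ?_
      simp only [z, map_add, map_smul, smul_add, smul_smul, inv_mul_cancel₀ (hsc t), one_smul, hv]
      rw [two_mul, pow_add, ContinuousLinearMap.mul_apply, ContinuousLinearMap.mul_apply, hu]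
    obtain ⟨t, ht⟩ := ((hz.eventually (hU.mem_nhds hxU)).and
      ((hz1.eventually (hV1.mem_nhds hy1V)).and (hz2.eventually (hV2.mem_nhds hy2V)))).exists
    exact ⟨z t, ht.1, Set.mem_iUnion.2 ⟨(((2 : ℂ) ^ t)⁻¹, n t), hVb ⟨ht.2.1, ht.2.2⟩⟩⟩
  refine hmain.mono fun x hx => ?_
  simp only [Set.mem_iInter] at hx
  change Dense _
  rw [hB.dense_iff]
  intro o ho hne
  obtain ⟨p, hp⟩ := Set.mem_iUnion.1 (hx o ho)
  exact ⟨F p x, hp, p, rfl⟩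

theorem aux_phi (w : ℤ → ℝ) (hw : ∀ i, 0 < w i) :
    ∃ Φ : ℤ → ℝ, (∀ i, 0 < Φ i) ∧ ∀ i, Φ (i + 1) = w i * Φ i := by
  refine ⟨fun i => (∏ m ∈ Finset.range i.toNat, w m) *
    (∏ m ∈ Finset.range (-i).toNat, w (-(m + 1)))⁻¹, fun i => ?_, fun i => ?_⟩
  · exact mul_pos (Finset.prod_pos fun _ _ => hw _) (inv_pos.2 (Finset.prod_pos fun _ _ => hw _))
  · rcases le_or_gt 0 i with h | h
    · have e1 : (i + 1).toNat = i.toNat + 1 := by omega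
      have e2 : (-(i + 1)).toNat = 0 := by omega
      have e3 : (-i).toNat = 0 := by omega
      have e4 : ((i.toNat : ℕ) : ℤ) = i := by omega
      simp only [e1, e2, e3, Finset.prod_range_succ, e4]
      simp [mul_comm]
    · have e1 : (i + 1).toNat = 0 := by omega
      have e2 : i.toNat = 0 := by omega
      have e3 : (-i).toNat = (-(i + 1)).toNat + 1 := by omega
      have e4 : (-(((-(i + 1)).toNat : ℤ) + 1)) = i := by omega
      simp only [e1, e2, e3, Finset.prod_range_succ, e4]
      have := (hw i).ne'
      simp only [Finset.range_zero, Finset.prod_empty, one_mul, mul_inv]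
      field_simp

theorem aux_lt_pow (m : ℕ) : (m : ℤ) < (2 : ℤ) ^ m := by
  exact_mod_cast Nat.lt_two_pow_self

theorem aux_pow_step (s : ℕ) : (2 : ℤ) ^ (2 * (s + 1) + 1) = 4 * (2 : ℤ) ^ (2 * s + 1) := by
  rw [show 2 * (s + 1) + 1 = (2 * s + 1) + 2 by ring, pow_add]; ring

theorem aux_mono1 {r s : ℕ} (h : r ≤ s) :
    (2 : ℤ) ^ (2 * r + 1) + 2 * r ≤ (2 : ℤ) ^ (2 * s + 1) + 2 * s := by
  have : (2 : ℤ) ^ (2 * r + 1) ≤ (2 : ℤ) ^ (2 * s + 1) :=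
    pow_le_pow_right₀ (by norm_num) (by omega)
  omega

theorem aux_mono2 {r s : ℕ} (h : r ≤ s) :
    (2 : ℤ) ^ (2 * r + 1) - (2 * r + 1) ≤ (2 : ℤ) ^ (2 * s + 1) - (2 * s + 1) := by
  induction s, h using Nat.le_induction with
  | base => rfl
  | succ s _ ih =>
    have h1 := aux_pow_step s
    have h2 := aux_lt_pow (2 * s + 1)
    push_cast at *
    omega

theorem aux_Cpos {i : ℤ} (h : i ∈ Cset) : 0 < i := by
  obtain ⟨s, hs⟩ := Set.mem_iUnion.1 h
  have h2 := aux_lt_pow (2 * s + 1)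
  have := hs.1
  push_cast at *
  omega

theorem aux_Dpos {i : ℤ} (h : i ∈ Dset) : 0 < i := by
  obtain ⟨s, hs⟩ := Set.mem_iUnion.1 h
  have h2 := aux_lt_pow (2 * s + 1)
  have := hs.1
  push_cast at *
  omega

theorem aux_Eneg {i : ℤ} (h : i ∈ Eset) : i < 0 := by
  obtain ⟨s, rfl⟩ := h
  have : (0 : ℤ) < 2 ^ (2 * s + 1) := by positivity
  simpa using this

theorem aux_gap (s : ℕ) (i : ℤ) (h1 : (2 : ℤ) ^ (2 * s + 1) + (2 * s + 1) ≤ i)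
    (h2 : i < (2 : ℤ) ^ (2 * (s + 1) + 1) - (2 * (s + 1) + 1)) : i ∉ Cset ∪ Dset ∪ Eset := by
  have hp : (0 : ℤ) < 2 ^ (2 * s + 1) := by positivity
  rintro ((h | h) | h)
  · obtain ⟨r, hr1, hr2⟩ := Set.mem_iUnion.1 h
    rcases le_or_gt r s with hrs | hrs
    · have := aux_mono1 hrs
      omega
    · have := aux_mono2 (show s + 1 ≤ r from hrs)
      push_cast at *
      omega
  · obtain ⟨r, hr1, hr2⟩ := Set.mem_iUnion.1 h
    rcases le_or_gt r s with hrs | hrs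
    · have := aux_mono1 hrs
      omega
    · have := aux_mono2 (show s + 1 ≤ r from hrs)
      push_cast at *
      omega
  · have := aux_Eneg h
    omega

theorem aux_run (w Φ : ℤ → ℝ) (hrec : ∀ i, Φ (i + 1) = w i * Φ i) (c : ℝ) (a : ℤ) (m : ℕ)
    (h : ∀ i, a ≤ i → i < a + m → w i = c) : Φ (a + m) = c ^ m * Φ a := by
  induction m with
  | zero => simp
  | succ m ih =>
    have h1 := ih fun i hi hi' => h i hi (by push_cast; omega)
    have h2 := h (a + m) (by omega) (by push_cast; omega)
    push_cast
    rw [← add_assoc, hrec, h2, h1, pow_succ]; ring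

theorem aux_est (k : ℕ) (w Φ : ℤ → ℝ) (hpos : ∀ i, 0 < Φ i)
    (hrec : ∀ i, Φ (i + 1) = w i * Φ i)
    (hw : ∀ i, 2⁻¹ ≤ w i ∧ w i ≤ 2)
    (hC : ∀ i ∈ Cset, (k : ℤ) ≤ i → w i = 2⁻¹)
    (hD : ∀ i ∈ Dset, (k : ℤ) ≤ i → w i = 2)
    (hE : ∀ i ∈ Eset, (k : ℤ) ≤ -i → w i = 2)
    (hneg : ∀ i < 0, 1 ≤ w i)
    (helse : ∀ i, i ∉ Cset ∪ Dset ∪ Eset → w i = 1) (j : ℤ) :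
    Tendsto (fun t : ℕ => Φ (j + (2 ^ (4 * t + 1) : ℕ))) atTop (𝓝 0) ∧
    Tendsto (fun t : ℕ => ((2 : ℝ) ^ t)⁻¹ * Φ (j + 2 * (2 ^ (4 * t + 1) : ℕ))) atTop (𝓝 0) ∧
    Tendsto (fun t : ℕ => (2 : ℝ) ^ t * Φ (j - (2 ^ (4 * t + 1) : ℕ))) atTop (𝓝 0) ∧
    Tendsto (fun t : ℕ => (2 : ℝ) ^ t * Φ (j - 2 * (2 ^ (4 * t + 1) : ℕ))) atTop (𝓝 0) := by
  -- Lipschitz bounds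
  have hup : ∀ (m : ℕ) a, Φ (a + m) ≤ 2 ^ m * Φ a := by
    intro m a
    induction m with
    | zero => simp
    | succ m ih =>
      push_cast
      rw [← add_assoc, hrec, pow_succ]
      have := mul_le_mul_of_nonneg_right (hw (a + m)).2 (hpos (a + m)).le
      linarith
  have hdown : ∀ (m : ℕ) a, Φ (a - m) ≤ 2 ^ m * Φ a := by
    intro m a
    induction m with
    | zero => simp
    | succ m ih =>
      push_cast
      have h1 := hrec (a - (m + 1))
      rw [show a - ((m : ℤ) + 1) + 1 = a - m by ring] at h1
      have := mul_le_mul_of_nonneg_right (hw (a - (m + 1))).1 (hpos (a - (m + 1))).le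
      rw [pow_succ]
      linarith
  have hlip : ∀ a, Φ (j + a) ≤ 2 ^ j.natAbs * Φ a := by
    intro a
    rcases le_total 0 j with h | h
    · have := hup j.natAbs a
      rwa [show a + (j.natAbs : ℤ) = j + a by omega] at this
    · have := hdown j.natAbs a
      rwa [show a - (j.natAbs : ℤ) = j + a by omega] at this
  set J : ℝ := 2 ^ j.natAbs with hJ
  have hJpos : 0 < J := by positivity
  -- positive side
  have hk : ∀ s : ℕ, k ≤ s → (k : ℤ) ≤ 2 ^ (2 * s + 1) := by
    intro s hs
    have := aux_lt_pow (2 * s + 1)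
    push_cast at *
    omega
  set c := Φ ((2 : ℤ) ^ (2 * k + 1) + (2 * k + 1)) with hc
  have hflat : ∀ s : ℕ, ∀ i, (2 : ℤ) ^ (2 * s + 1) + (2 * s + 1) ≤ i →
      i ≤ (2 : ℤ) ^ (2 * (s + 1) + 1) - (2 * (s + 1) + 1) →
      Φ i = Φ ((2 : ℤ) ^ (2 * s + 1) + (2 * s + 1)) := by
    intro s i h1 h2
    have := aux_run w Φ hrec 1 ((2 : ℤ) ^ (2 * s + 1) + (2 * s + 1))
      (i - ((2 : ℤ) ^ (2 * s + 1) + (2 * s + 1))).toNat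
      (fun q hq hq' => helse q (aux_gap s q hq (by omega)))
    rw [one_pow, one_mul] at this
    rw [← this]
    congr 1
    omega
  have hfit : ∀ s : ℕ, (2 : ℤ) ^ (2 * s + 1) + (2 * s + 1) ≤ 2 * 2 ^ (2 * s + 1) ∧
      2 * 2 ^ (2 * s + 1) ≤ (2 : ℤ) ^ (2 * (s + 1) + 1) - (2 * (s + 1) + 1) := by
    intro s
    have h1 := aux_pow_step s
    have h2 := aux_lt_pow (2 * s + 1)
    push_cast at *
    omega
  have hCrun : ∀ s : ℕ, k ≤ s → Φ ((2 : ℤ) ^ (2 * (s + 1) + 1)) =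
      2⁻¹ ^ (2 * (s + 1) + 1) * Φ ((2 : ℤ) ^ (2 * s + 1) + (2 * s + 1)) := by
    intro s hs
    have hf := hfit s
    have hks := hk s hs
    have hp : (0 : ℤ) < 2 ^ (2 * s + 1) := by positivity
    rw [← hflat s ((2 : ℤ) ^ (2 * (s + 1) + 1) - (2 * (s + 1) + 1)) (by omega) le_rfl]
    rw [← aux_run w Φ hrec 2⁻¹ _ (2 * (s + 1) + 1)]
    · congr 1; push_cast; ring
    · intro i hi hi'
      refine hC i (Set.mem_iUnion.2 ⟨s + 1, ?_⟩) (by omega)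
      push_cast at *
      exact ⟨by omega, by omega⟩
  have hDrun : ∀ s : ℕ, k ≤ s → Φ ((2 : ℤ) ^ (2 * (s + 1) + 1) + (2 * ((s + 1 : ℕ) : ℤ) + 1)) =
      2 ^ (2 * (s + 1) + 1) * Φ ((2 : ℤ) ^ (2 * (s + 1) + 1)) := by
    intro s hs
    have hks := hk (s + 1) (by omega)
    rw [← aux_run w Φ hrec 2 _ (2 * (s + 1) + 1)]
    · congr 1
    · intro i hi hi'
      refine hD i (Set.mem_iUnion.2 ⟨s + 1, ?_⟩) (by omega)
      push_cast at *
      exact ⟨by omega, by omega⟩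
  have hconst : ∀ s : ℕ, k ≤ s → Φ ((2 : ℤ) ^ (2 * s + 1) + (2 * s + 1)) = c := by
    intro s hs
    induction s, hs using Nat.le_induction with
    | base => rfl
    | succ s hs ih =>
      rw [hDrun s hs, hCrun s hs, ih, ← mul_assoc, ← mul_pow]
      norm_num
  -- negative side
  have hmonoN : ∀ (m : ℕ) (a : ℤ), a + m ≤ 0 → Φ a ≤ Φ (a + m) := by
    intro m a
    induction m with
    | zero => simp
    | succ m ih =>
      intro h
      push_cast at h ⊢
      rw [← add_assoc, hrec]
      have h1 := ih (by omega)
      have := mul_le_mul_of_nonneg_right (hneg (a + m) (by omega)) (hpos (a + m)).le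
      linarith
  have hmono : ∀ a b : ℤ, a ≤ b → b ≤ 0 → Φ a ≤ Φ b := by
    intro a b h1 h2
    have := hmonoN (b - a).toNat a (by omega)
    rwa [show a + ((b - a).toNat : ℤ) = b by omega] at this
  set d := Φ (-(2 : ℤ) ^ (2 * k + 1)) with hd
  have hdec : ∀ s : ℕ, k ≤ s → 2 ^ s * Φ (-(2 : ℤ) ^ (2 * s + 1)) ≤ 2 ^ k * d := by
    intro s hs
    induction s, hs using Nat.le_induction with
    | base => exact le_rfl
    | succ s hs ih =>
      have hks := hk (s + 1) (by omega)
      have h1 := hrec (-(2 : ℤ) ^ (2 * (s + 1) + 1))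
      rw [hE _ ⟨s + 1, rfl⟩ (by simpa using hks)] at h1
      have hp : (0 : ℤ) < 2 ^ (2 * s + 1) := by positivity
      have h2 := hmono (-(2 : ℤ) ^ (2 * (s + 1) + 1) + 1) (-(2 : ℤ) ^ (2 * s + 1))
        (by rw [aux_pow_step s]; omega) (by omega)
      have h3 : (0 : ℝ) < 2 ^ s := by positivity
      have h4 := mul_le_mul_of_nonneg_left h2 h3.le
      rw [h1] at h4
      rw [pow_succ]
      linarith
  have hexp : ∀ t : ℕ, ((2 ^ (4 * t + 1) : ℕ) : ℤ) = (2 : ℤ) ^ (2 * (2 * t) + 1) := by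
    intro t
    push_cast
    congr 1; ring
  have hgeo : Tendsto (fun t : ℕ => ((2 : ℝ) ^ t)⁻¹) atTop (𝓝 0) := by
    have : Tendsto (fun t : ℕ => ((2 : ℝ)⁻¹) ^ t) atTop (𝓝 0) :=
      tendsto_pow_atTop_nhds_zero_of_lt_one (by norm_num) (by norm_num)
    simpa [inv_pow] using this
  have hsq : ∀ t : ℕ, (2 : ℝ) ^ (2 * t) = 2 ^ t * 2 ^ t := fun t => by rw [two_mul, pow_add]
  have hgeoc : ∀ b : ℝ, Tendsto (fun t : ℕ => b * ((2 : ℝ) ^ t)⁻¹) atTop (𝓝 0) := fun b => by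
    simpa using hgeo.const_mul b
  have hcpos : 0 < c := hpos _
  simp only [hexp, sub_eq_add_neg]
  refine ⟨?_, ?_, ?_, ?_⟩
  · refine squeeze_zero' (Eventually.of_forall fun t => (hpos _).le) ?_ (hgeoc (J * c))
    filter_upwards [eventually_ge_atTop (k + 1)] with t ht
    obtain ⟨s, hs⟩ : ∃ s, 2 * t = s + 1 := ⟨2 * t - 1, by omega⟩
    refine (hlip _).trans ?_
    rw [mul_assoc, hs, hCrun s (by omega), hconst s (by omega), mul_comm c]
    refine mul_le_mul_of_nonneg_left (mul_le_mul_of_nonneg_right ?_ hcpos.le) hJpos.le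
    rw [← inv_pow]
    exact pow_le_pow_of_le_one (by norm_num) (by norm_num) (by omega)
  · refine squeeze_zero' (Eventually.of_forall fun t => mul_nonneg (by positivity) (hpos _).le) ?_
      (hgeoc (J * c))
    filter_upwards [eventually_ge_atTop k] with t ht
    have h1 := hlip (2 * 2 ^ (2 * (2 * t) + 1))
    have h2 := hfit (2 * t)
    rw [hflat (2 * t) _ h2.1 h2.2, hconst (2 * t) (by omega)] at h1
    rw [mul_comm]
    exact mul_le_mul_of_nonneg_right h1 (by positivity)
  · refine squeeze_zero' (Eventually.of_forall fun t => mul_nonneg (by positivity) (hpos _).le) ?_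
      (hgeoc (J * (2 ^ k * d)))
    filter_upwards [eventually_ge_atTop k] with t ht
    have h1 := hlip (-2 ^ (2 * (2 * t) + 1))
    have h2 := hdec (2 * t) (by omega)
    rw [hsq] at h2
    have h3 : (0 : ℝ) < 2 ^ t := by positivity
    rw [← div_eq_mul_inv, le_div_iff₀ h3]
    calc _ ≤ 2 ^ t * (J * Φ (-2 ^ (2 * (2 * t) + 1))) * 2 ^ t := by gcongr
      _ = J * (2 ^ t * 2 ^ t * Φ (-2 ^ (2 * (2 * t) + 1))) := by ring
      _ ≤ _ := by gcongr
  · refine squeeze_zero' (Eventually.of_forall fun t => mul_nonneg (by positivity) (hpos _).le) ?_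
      (hgeoc (J * (2 ^ k * d)))
    filter_upwards [eventually_ge_atTop k] with t ht
    have hp : (0 : ℤ) < 2 ^ (2 * (2 * t) + 1) := by positivity
    have h1 := hlip (-(2 * 2 ^ (2 * (2 * t) + 1)))
    have h0 := hmono (-(2 * 2 ^ (2 * (2 * t) + 1))) (-2 ^ (2 * (2 * t) + 1)) (by omega) (by omega)
    have h2 := hdec (2 * t) (by omega)
    rw [hsq] at h2
    have h3 : (0 : ℝ) < 2 ^ t := by positivity
    rw [← div_eq_mul_inv, le_div_iff₀ h3]
    calc _ ≤ 2 ^ t * (J * Φ (-(2 * 2 ^ (2 * (2 * t) + 1)))) * 2 ^ t := by gcongr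
      _ ≤ 2 ^ t * (J * Φ (-2 ^ (2 * (2 * t) + 1))) * 2 ^ t := by gcongr
      _ = J * (2 ^ t * 2 ^ t * Φ (-2 ^ (2 * (2 * t) + 1))) := by ring
      _ ≤ _ := by gcongr

theorem stmt11
    {K : Type*} [NormedAddCommGroup K] [InnerProductSpace ℂ K] [CompleteSpace K]
    (f : ℕ → K) (hf : Orthonormal ℂ f)
    (hfdense : Dense (Submodule.span ℂ (Set.range f) : Set K))
    (A : ℤ → K →L[ℂ] K)
    (hAC : ∀ n ∈ Cset, ∀ k : ℕ, A n (f k) = if (k : ℤ) ≤ n then (2 : ℂ)⁻¹ • f k else f k)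
    (hAD : ∀ n ∈ Dset, ∀ k : ℕ, A n (f k) = if (k : ℤ) ≤ n then (2 : ℂ) • f k else f k)
    (hAE : ∀ n ∈ Eset, ∀ k : ℕ, A n (f k) = if (k : ℤ) ≤ -n then (2 : ℂ) • f k else f k)
    (hAelse : ∀ n : ℤ, n ∉ Cset ∪ Dset ∪ Eset → ∀ k : ℕ, A n (f k) = f k)
    (T : lp (fun _ : ℤ => K) 2 →L[ℂ] lp (fun _ : ℤ => K) 2)
    (hT : ∀ (x : lp (fun _ : ℤ => K) 2) (j : ℤ),
      (T x : ∀ _ : ℤ, K) j = A (j - 1) ((x : ∀ _ : ℤ, K) (j - 1))) :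
    Dense {x : lp (fun _ : ℤ => K) 2 | Dense (Set.range fun p : ℂ × ℕ =>
      (p.1 • ((T ^ p.2) x), p.1 • ((T ^ (2 * p.2)) x)))} := by
  classical
  have hfne : ∀ k, f k ≠ 0 := fun k => hf.ne_zero k
  have hwex : ∀ k i, ∃ c : ℝ, A i (f k) = (c : ℂ) • f k ∧ (2⁻¹ ≤ c ∧ c ≤ 2) ∧ (i < 0 → 1 ≤ c) := by
    intro k i
    by_cases h1 : i ∈ Cset
    · have hp := aux_Cpos h1
      rw [hAC i h1 k]
      split_ifs
      · exact ⟨2⁻¹, by simp, by norm_num, fun h => by omega⟩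
      · exact ⟨1, by simp, by norm_num, fun h => by omega⟩
    by_cases h2 : i ∈ Dset
    · rw [hAD i h2 k]
      split_ifs
      · exact ⟨2, by simp, by norm_num, by norm_num⟩
      · exact ⟨1, by simp, by norm_num, by norm_num⟩
    by_cases h3 : i ∈ Eset
    · rw [hAE i h3 k]
      split_ifs
      · exact ⟨2, by simp, by norm_num, by norm_num⟩
      · exact ⟨1, by simp, by norm_num, by norm_num⟩
    · refine ⟨1, ?_, by norm_num, by norm_num⟩
      rw [hAelse i (by simp [h1, h2, h3]) k]
      simp
  choose w hw hwb hwn using hwex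
  have hweq : ∀ k i (c : ℝ), A i (f k) = (c : ℂ) • f k → w k i = c := by
    intro k i c h
    rw [hw k i] at h
    exact_mod_cast smul_left_injective ℂ (hfne k) h
  have hΦ := fun k => aux_phi (w k) (fun i => lt_of_lt_of_le (by norm_num) (hwb k i).1)
  choose Φ hΦpos hΦrec using hΦ
  have hest := fun k j => aux_est k (w k) (Φ k) (hΦpos k) (hΦrec k) (hwb k)
    (fun i hi hk => hweq k i _ (by rw [hAC i hi k, if_pos hk]; simp))
    (fun i hi hk => hweq k i _ (by rw [hAD i hi k, if_pos hk]; simp))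
    (fun i hi hk => hweq k i _ (by rw [hAE i hi k, if_pos hk]; simp))
    (hwn k)
    (fun i hi => hweq k i _ (by rw [hAelse i hi k]; simp)) j
  let g : ℕ → ℤ → lp (fun _ : ℤ => K) 2 := fun k j =>
    lp.single (E := fun _ : ℤ => K) 2 j ((Φ k j : ℂ) • f k)
  have hnorm : ∀ k j, ‖g k j‖ = Φ k j := by
    intro k j
    simp only [g]
    rw [lp.norm_single (by norm_num), norm_smul, hf.1 k, mul_one, Complex.norm_real,
      Real.norm_of_nonneg (hΦpos k j).le]
  have hTs : ∀ (j : ℤ) (y : K), T (lp.single (E := fun _ : ℤ => K) 2 j y) =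
      lp.single (E := fun _ : ℤ => K) 2 (j + 1) (A j y) := by
    intro j y
    ext i
    rw [hT]
    by_cases h : i = j + 1
    · subst h
      rw [lp.single_apply_self, show j + 1 - 1 = j by ring, lp.single_apply_self]
    · rw [lp.single_apply_ne _ _ _ h, lp.single_apply_ne _ _ _ (by omega), map_zero]
  refine aux_crit T g ?_ ?_ (fun t => 2 ^ (4 * t + 1)) ?_ ?_ ?_ ?_
  · intro k j
    simp only [g]
    rw [hTs, map_smul, hw k j, smul_smul, hΦrec, mul_comm]
    push_cast
    rfl
  · set S := Submodule.span ℂ (Set.range fun p : ℕ × ℤ => g p.1 p.2) with hS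
    have hmem : ∀ k j, lp.single (E := fun _ : ℤ => K) 2 j (f k) ∈ S := by
      intro k j
      have h1 : g k j ∈ S := Submodule.subset_span ⟨(k, j), rfl⟩
      have h2 := S.smul_mem ((Φ k j : ℂ)⁻¹) h1
      have h3 : (Φ k j : ℂ) ≠ 0 := by exact_mod_cast (hΦpos k j).ne'
      simp only [g] at h2
      rwa [← lp.single_smul, smul_smul, inv_mul_cancel₀ h3, one_smul] at h2
    have hmem2 : ∀ (j : ℤ) (y : K), lp.single (E := fun _ : ℤ => K) 2 j y ∈
        S.topologicalClosure := by
      intro j y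
      have hcl : IsClosed {y : K | lp.single (E := fun _ : ℤ => K) 2 j y ∈
          S.topologicalClosure} :=
        S.isClosed_topologicalClosure.preimage (lp.isometry_single j).continuous
      have hsub : (Submodule.span ℂ (Set.range f) : Set K) ⊆
          {y : K | lp.single (E := fun _ : ℤ => K) 2 j y ∈ S.topologicalClosure} := by
        intro y hy
        have : Submodule.span ℂ (Set.range f) ≤ S.topologicalClosure.comap
            (lp.lsingle (𝕜 := ℂ) (E := fun _ : ℤ => K) 2 j) := by
          rw [Submodule.span_le]
          rintro _ ⟨k, rfl⟩
          exact S.le_topologicalClosure (hmem k j)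
        exact this hy
      exact closure_minimal hsub hcl (hfdense y)
    intro x
    have hx := lp.hasSum_single (p := 2) (by norm_num) x
    exact S.isClosed_topologicalClosure.mem_of_tendsto hx
      (Eventually.of_forall fun s => Submodule.sum_mem _ fun i _ => hmem2 i _)
  · intro k j
    rw [tendsto_zero_iff_norm_tendsto_zero]
    simp only [hnorm]
    exact (hest k j).1
  · intro k j
    rw [tendsto_zero_iff_norm_tendsto_zero]
    simp only [norm_smul, hnorm, norm_inv, norm_pow, Complex.norm_ofNat]
    exact (hest k j).2.1
  · intro k j
    rw [tendsto_zero_iff_norm_tendsto_zero]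
    simp only [norm_smul, hnorm, norm_pow, Complex.norm_ofNat]
    exact (hest k j).2.2.1
  · intro k j
    rw [tendsto_zero_iff_norm_tendsto_zero]
    simp only [norm_smul, hnorm, norm_pow, Complex.norm_ofNat]
    exact (hest k j).2.2.2
end
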